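/- arXiv:0811.2777 — 8 statements merged into one kernel-verified Lean document; each statement's English description precedes it below -/
import Mathlib

section
/- Each of the six bijections α, β, γ, a, b, c is an involution (its composition with itself is the identity), and the following conjugation relations hold in Γ: a∘α∘a = α, b∘α∘b = α, c∘α∘c = α, a∘β∘a = β, b∘β∘b = β, c∘β∘c = γ∘β∘γ, a∘γ∘a = α∘γ∘α, b∘γ∘b = β∘γ∘β, c∘γ∘c = γ. -/
/-!
An automorphism of the word tree is determined by its action on the first letter and by its
sections, the maps induced on the remaining letters: in wreath notation
`β = (α, γ, α, γ)`, `γ = (β, 1, 1, β)`, `b = (aα, aα, c, c)`, `c = (bβ, bβ, b, b)`, while `α` and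
`a` only permute the first letter. Comparing sections reduces a relation to relations on shorter
words.

Conjugation by `a`, and commutation of `b` and `c` with `α`, hold because the sections of the two
sides agree. The other relations come in pairs in which each relation is, modulo the preceding
pairs, implied by shorter instances of the two: `β² = γ² = 1`; `bβ = βb` and `cγ = γc`;
`b² = c² = 1`; `bγ = βγβb` and `cβ = γβγc`. For instance the sections of `bβ = βb` are `aα² = αaα`,
`aαγ = γaα`, `cα = αc` and `cγ = γc`, and those of `cγ = γc` are `bβ² = βbβ`, two trivial ones and
`bβ = βb`. Each pair is thus proved by one induction on the word.
-/

/-- The alphabet `X = {1,2,3,4}`, encoded as `Fin 4` (letter i ↔ `i-1`). -/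
abbrev Alph : Type := Fin 4

/-- The set `X*` of finite words over the alphabet. -/
abbrev Word : Type := List Alph

/-- The permutation σ = (12)(34) of the alphabet. -/
def permSigma : Alph → Alph := ![1, 0, 3, 2]

/-- The permutation π = (13)(24) of the alphabet. -/
def permPi : Alph → Alph := ![2, 3, 0, 1]

/-- A system of six bijections α, β, γ, a, b, c of `X*` satisfying the defining
recursions (each fixes the empty word; the recursions uniquely determine them). -/
structure NekSystem where
  α : Equiv.Perm Word
  β : Equiv.Perm Word
  γ : Equiv.Perm Word
  a : Equiv.Perm Word
  b : Equiv.Perm Word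
  c : Equiv.Perm Word
  hαnil : α [] = []
  hβnil : β [] = []
  hγnil : γ [] = []
  hanil : a [] = []
  hbnil : b [] = []
  hcnil : c [] = []
  hα : ∀ (x : Alph) (w : Word), α (x :: w) = permSigma x :: w
  ha : ∀ (x : Alph) (w : Word), a (x :: w) = permPi x :: w
  hβ0 : ∀ w : Word, β (0 :: w) = 0 :: α w
  hβ1 : ∀ w : Word, β (1 :: w) = 1 :: γ w
  hβ2 : ∀ w : Word, β (2 :: w) = 2 :: α w
  hβ3 : ∀ w : Word, β (3 :: w) = 3 :: γ w
  hγ0 : ∀ w : Word, γ (0 :: w) = 0 :: β w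
  hγ1 : ∀ w : Word, γ (1 :: w) = 1 :: w
  hγ2 : ∀ w : Word, γ (2 :: w) = 2 :: w
  hγ3 : ∀ w : Word, γ (3 :: w) = 3 :: β w
  hb0 : ∀ w : Word, b (0 :: w) = 0 :: a (α w)
  hb1 : ∀ w : Word, b (1 :: w) = 1 :: a (α w)
  hb2 : ∀ w : Word, b (2 :: w) = 2 :: c w
  hb3 : ∀ w : Word, b (3 :: w) = 3 :: c w
  hc0 : ∀ w : Word, c (0 :: w) = 0 :: b (β w)
  hc1 : ∀ w : Word, c (1 :: w) = 1 :: b (β w)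
  hc2 : ∀ w : Word, c (2 :: w) = 2 :: b w
  hc3 : ∀ w : Word, c (3 :: w) = 3 :: b w

lemma conj_eq_of_semiconj {X : Type*} {g x y : Equiv.Perm X} (hg : Function.Involutive g)
    (h : Function.Semiconj g x y) : g * x * g = y := by
  ext w
  calc g (x (g w)) = y (g (g w)) := h (g w)
    _ = y w := by rw [hg w]

namespace NekSystem

attribute [simp] hαnil hβnil hγnil hanil hbnil hcnil hα ha hβ0 hβ1 hβ2 hβ3 hγ0 hγ1 hγ2 hγ3
  hb0 hb1 hb2 hb3 hc0 hc1 hc2 hc3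

variable (S : NekSystem)

lemma involutive_α : Function.Involutive S.α := by
  rintro (_ | ⟨x, w⟩)
  · simp
  · fin_cases x <;> simp [permSigma]

lemma involutive_a : Function.Involutive S.a := by
  rintro (_ | ⟨x, w⟩)
  · simp
  · fin_cases x <;> simp [permPi]

lemma involutive_β_and_γ : Function.Involutive S.β ∧ Function.Involutive S.γ := by
  suffices h : ∀ w, S.β (S.β w) = w ∧ S.γ (S.γ w) = w from
    ⟨fun w ↦ (h w).1, fun w ↦ (h w).2⟩
  intro w
  induction w with
  | nil => simp
  | cons x w ih =>
    obtain ⟨hβ, hγ⟩ := ih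
    constructor <;> fin_cases x <;> simp [S.involutive_α w, hβ, hγ]

lemma involutive_β : Function.Involutive S.β := S.involutive_β_and_γ.1

lemma involutive_γ : Function.Involutive S.γ := S.involutive_β_and_γ.2

lemma commute_a_α : Function.Commute S.a S.α := by
  rintro (_ | ⟨x, w⟩)
  · simp
  · fin_cases x <;> simp [permPi, permSigma]

lemma commute_a_β : Function.Commute S.a S.β := by
  rintro (_ | ⟨x, w⟩)
  · simp
  · fin_cases x <;> simp [permPi]

lemma semiconj_a_γ : Function.Semiconj S.a S.γ (S.α * S.γ * S.α : Equiv.Perm Word) := by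
  rintro (_ | ⟨x, w⟩)
  · simp
  · fin_cases x <;> simp [permPi, permSigma]

lemma involutive_a_mul_α : Function.Involutive (S.a * S.α : Equiv.Perm Word) := fun w ↦
  calc S.a (S.α (S.a (S.α w))) = S.a (S.a (S.α (S.α w))) := by rw [S.commute_a_α (S.α w)]
    _ = w := by rw [S.involutive_a, S.involutive_α]

lemma commute_a_mul_α_γ : Function.Commute (S.a * S.α : Equiv.Perm Word) S.γ := fun w ↦
  calc S.a (S.α (S.γ w)) = S.α (S.a (S.γ w)) := S.commute_a_α (S.γ w)
    _ = S.α (S.α (S.γ (S.α (S.a w)))) := congrArg S.α (S.semiconj_a_γ w)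
    _ = S.γ (S.a (S.α w)) := by rw [S.involutive_α, S.commute_a_α w]

lemma commute_b_α : Function.Commute S.b S.α := by
  rintro (_ | ⟨x, w⟩)
  · simp
  · fin_cases x <;> simp [permSigma]

lemma commute_c_α : Function.Commute S.c S.α := by
  rintro (_ | ⟨x, w⟩)
  · simp
  · fin_cases x <;> simp [permSigma]

lemma commute_b_β_and_c_γ : Function.Commute S.b S.β ∧ Function.Commute S.c S.γ := by
  suffices h : ∀ w, S.b (S.β w) = S.β (S.b w) ∧ S.c (S.γ w) = S.γ (S.c w) from
    ⟨fun w ↦ (h w).1, fun w ↦ (h w).2⟩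
  intro w
  induction w with
  | nil => simp
  | cons x w ih =>
    obtain ⟨hbβ, hcγ⟩ := ih
    have haαα : S.a (S.α (S.α w)) = S.α (S.a (S.α w)) := S.commute_a_α (S.α w)
    have haαγ : S.a (S.α (S.γ w)) = S.γ (S.a (S.α w)) := S.commute_a_mul_α_γ w
    have hbββ : S.b (S.β (S.β w)) = S.β (S.b (S.β w)) := by
      rw [hbβ, S.involutive_β, S.involutive_β]
    constructor
    · fin_cases x <;> simp [haαα, haαγ, S.commute_c_α w, hcγ]
    · fin_cases x <;> simp [hbββ, hbβ]

lemma commute_b_β : Function.Commute S.b S.β := S.commute_b_β_and_c_γ.1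

lemma commute_c_γ : Function.Commute S.c S.γ := S.commute_b_β_and_c_γ.2

lemma involutive_b_and_c : Function.Involutive S.b ∧ Function.Involutive S.c := by
  suffices h : ∀ w, S.b (S.b w) = w ∧ S.c (S.c w) = w from
    ⟨fun w ↦ (h w).1, fun w ↦ (h w).2⟩
  intro w
  induction w with
  | nil => simp
  | cons x w ih =>
    obtain ⟨hb, hc⟩ := ih
    have haα : S.a (S.α (S.a (S.α w))) = w := S.involutive_a_mul_α w
    have hbβ : S.b (S.β (S.b (S.β w))) = w := by
      rw [← S.commute_b_β (S.β w), S.involutive_β, hb]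
    constructor
    · fin_cases x <;> simp [haα, hc]
    · fin_cases x <;> simp [hbβ, hb]

lemma involutive_b : Function.Involutive S.b := S.involutive_b_and_c.1

lemma involutive_c : Function.Involutive S.c := S.involutive_b_and_c.2

lemma semiconj_b_γ_and_c_β :
    Function.Semiconj S.b S.γ (S.β * S.γ * S.β : Equiv.Perm Word) ∧
      Function.Semiconj S.c S.β (S.γ * S.β * S.γ : Equiv.Perm Word) := by
  suffices h : ∀ w, S.b (S.γ w) = S.β (S.γ (S.β (S.b w))) ∧
      S.c (S.β w) = S.γ (S.β (S.γ (S.c w))) from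
    ⟨fun w ↦ (h w).1, fun w ↦ (h w).2⟩
  intro w
  induction w with
  | nil => simp
  | cons x w ih =>
    obtain ⟨hbγ, hcβ⟩ := ih
    have haαβ : S.a (S.α (S.β w)) = S.α (S.β (S.α (S.a (S.α w)))) :=
      calc S.a (S.α (S.β w)) = S.α (S.β (S.a w)) := by rw [S.commute_a_α, S.commute_a_β]
        _ = S.α (S.β (S.α (S.a (S.α w)))) := by rw [S.commute_a_α w, S.involutive_α]
    have hbβα : S.b (S.β (S.α w)) = S.β (S.α (S.β (S.b (S.β w)))) :=
      calc S.b (S.β (S.α w)) = S.β (S.α (S.b w)) := by rw [S.commute_b_β, S.commute_b_α]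
        _ = S.β (S.α (S.β (S.b (S.β w)))) := by rw [S.commute_b_β w, S.involutive_β]
    have hbβγ : S.b (S.β (S.γ w)) = S.γ (S.b (S.β w)) :=
      calc S.b (S.β (S.γ w)) = S.β (S.β (S.γ (S.β (S.b w)))) := by rw [S.commute_b_β, hbγ]
        _ = S.γ (S.b (S.β w)) := by rw [S.involutive_β, S.commute_b_β w]
    constructor
    · fin_cases x <;> simp [haαβ, S.involutive_γ _, S.involutive_α _, hcβ]
    · fin_cases x <;> simp [hbβα, hbβγ, S.commute_b_α w, hbγ]

lemma semiconj_b_γ : Function.Semiconj S.b S.γ (S.β * S.γ * S.β : Equiv.Perm Word) :=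
  S.semiconj_b_γ_and_c_β.1

lemma semiconj_c_β : Function.Semiconj S.c S.β (S.γ * S.β * S.γ : Equiv.Perm Word) :=
  S.semiconj_b_γ_and_c_β.2

end NekSystem

/-- Each of α, β, γ, a, b, c is an involution, and the stated conjugation
relations hold in Γ (products are compositions, `(g*h) w = g (h w)`). -/
theorem statement1 (S : NekSystem) :
    (S.α * S.α = 1 ∧ S.β * S.β = 1 ∧ S.γ * S.γ = 1 ∧
      S.a * S.a = 1 ∧ S.b * S.b = 1 ∧ S.c * S.c = 1) ∧
    (S.a * S.α * S.a = S.α ∧ S.b * S.α * S.b = S.α ∧ S.c * S.α * S.c = S.α ∧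
      S.a * S.β * S.a = S.β ∧ S.b * S.β * S.b = S.β ∧
      S.c * S.β * S.c = S.γ * S.β * S.γ ∧
      S.a * S.γ * S.a = S.α * S.γ * S.α ∧
      S.b * S.γ * S.b = S.β * S.γ * S.β ∧
      S.c * S.γ * S.c = S.γ) := by
  refine ⟨⟨Equiv.ext S.involutive_α, Equiv.ext S.involutive_β, Equiv.ext S.involutive_γ,
    Equiv.ext S.involutive_a, Equiv.ext S.involutive_b, Equiv.ext S.involutive_c⟩,
    ?_, ?_, ?_, ?_, ?_, ?_, ?_, ?_, ?_⟩
  · exact conj_eq_of_semiconj S.involutive_a S.commute_a_α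
  · exact conj_eq_of_semiconj S.involutive_b S.commute_b_α
  · exact conj_eq_of_semiconj S.involutive_c S.commute_c_α
  · exact conj_eq_of_semiconj S.involutive_a S.commute_a_β
  · exact conj_eq_of_semiconj S.involutive_b S.commute_b_β
  · exact conj_eq_of_semiconj S.involutive_c S.semiconj_c_β
  · exact conj_eq_of_semiconj S.involutive_a S.semiconj_a_γ
  · exact conj_eq_of_semiconj S.involutive_b S.semiconj_b_γ
  · exact conj_eq_of_semiconj S.involutive_c S.commute_c_γ
end

section
/- In the group Γ the relations (α∘γ)^4 = id, (α∘β)^8 = id, and (β∘γ)^8 = id hold. -/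
open Equiv

section WreathRecursion

variable {X : Type*}

/-- The wreath recursion `g = (s x)ₓ π` of a permutation `g` of the words over `X`: it fixes the
empty word, acts by `π` on the first letter, and acts by the section `s x` on the rest of a word
starting with `x`. Only the value of `π` as a map matters, so it is not bundled as a permutation. -/
structure HasWreathRecursion (g : Perm (List X)) (π : X → X) (s : X → Perm (List X)) : Prop where
  map_nil : g [] = []
  map_cons (x : X) (w : List X) : g (x :: w) = π x :: s x w

namespace HasWreathRecursion

variable {g h : Perm (List X)} {π ρ : X → X} {s t : X → Perm (List X)}

lemma one : HasWreathRecursion (1 : Perm (List X)) id 1 where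
  map_nil := rfl
  map_cons _ _ := rfl

lemma mul (hg : HasWreathRecursion g π s) (hh : HasWreathRecursion h ρ t) :
    HasWreathRecursion (g * h) (π ∘ ρ) (s ∘ ρ * t) where
  map_nil := by rw [Perm.mul_apply, hh.map_nil, hg.map_nil]
  map_cons x w := by rw [Perm.mul_apply, hh.map_cons, hg.map_cons]; rfl

lemma pow (hg : HasWreathRecursion g id s) (n : ℕ) : HasWreathRecursion (g ^ n) id (s ^ n) := by
  induction n with
  | zero => exact one
  | succ n ih =>
    rw [pow_succ, pow_succ]
    exact ih.mul hg

lemma eq_one (hg : HasWreathRecursion g id 1) : g = 1 := by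
  ext1 w
  cases w with
  | nil => exact hg.map_nil
  | cons x w => exact hg.map_cons x w

end HasWreathRecursion

lemma eq_one_of_sections_mem_closure {K : Set (Perm (List X))}
    (hK : ∀ g ∈ K, ∃ s, HasWreathRecursion g id s ∧ ∀ x, s x ∈ Subgroup.closure K) :
    ∀ g ∈ K, g = 1 := by
  suffices fixes : ∀ w, ∀ g ∈ K, g w = w from fun g hg ↦ Equiv.ext fun w ↦ fixes w g hg
  intro w
  induction w with
  | nil =>
    intro g hg
    obtain ⟨s, hs, -⟩ := hK g hg
    exact hs.map_nil
  | cons x w ih =>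
    intro g hg
    obtain ⟨s, hs, s_mem⟩ := hK g hg
    have closure_le : Subgroup.closure K ≤ MulAction.stabilizer (Perm (List X)) w :=
      (Subgroup.closure_le _).2 ih
    have section_fixes : s x w = w := closure_le (s_mem x)
    rw [hs.map_cons, section_fixes, id]

end WreathRecursion

lemma mul_pow_eq_one_comm {M : Type*} [CancelMonoid M] {a b : M} {n : ℕ} :
    (a * b) ^ n = 1 ↔ (b * a) ^ n = 1 := by
  rw [← mul_eq_right (b := a), mul_pow_mul, mul_eq_left]

lemma permSigma_comp_permSigma : permSigma ∘ permSigma = id := by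
  decide

namespace NekSystem

variable (S : NekSystem)

lemma hasWreathRecursion_α : HasWreathRecursion S.α permSigma 1 :=
  ⟨S.hαnil, S.hα⟩

lemma hasWreathRecursion_β : HasWreathRecursion S.β id ![S.α, S.γ, S.α, S.γ] :=
  ⟨S.hβnil, fun x ↦ by fin_cases x; exacts [S.hβ0, S.hβ1, S.hβ2, S.hβ3]⟩

lemma hasWreathRecursion_γ : HasWreathRecursion S.γ id ![S.β, 1, 1, S.β] :=
  ⟨S.hγnil, fun x ↦ by fin_cases x; exacts [S.hγ0, S.hγ1, S.hγ2, S.hγ3]⟩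

lemma α_sq : S.α ^ 2 = 1 := by
  have recursion := S.hasWreathRecursion_α.mul S.hasWreathRecursion_α
  rw [permSigma_comp_permSigma, mul_one, ← sq] at recursion
  exact recursion.eq_one

lemma hasWreathRecursion_β_sq : HasWreathRecursion (S.β ^ 2) id ![1, S.γ ^ 2, 1, S.γ ^ 2] := by
  convert S.hasWreathRecursion_β.pow 2 using 1
  ext1 x
  fin_cases x
  exacts [S.α_sq.symm, rfl, S.α_sq.symm, rfl]

lemma hasWreathRecursion_γ_sq : HasWreathRecursion (S.γ ^ 2) id ![S.β ^ 2, 1, 1, S.β ^ 2] := by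
  convert S.hasWreathRecursion_γ.pow 2 using 1
  ext1 x
  fin_cases x
  exacts [rfl, (one_pow 2).symm, (one_pow 2).symm, rfl]

lemma β_sq_and_γ_sq : S.β ^ 2 = 1 ∧ S.γ ^ 2 = 1 := by
  set K : Set (Perm Word) := {S.β ^ 2, S.γ ^ 2}
  have β_sq_mem : S.β ^ 2 ∈ Subgroup.closure K := Subgroup.subset_closure (.inl rfl)
  have γ_sq_mem : S.γ ^ 2 ∈ Subgroup.closure K := Subgroup.subset_closure (.inr rfl)
  have trivial_on_K : ∀ g ∈ K, g = 1 := by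
    apply eq_one_of_sections_mem_closure
    rintro g (rfl | rfl)
    · refine ⟨_, S.hasWreathRecursion_β_sq, fun x ↦ ?_⟩
      fin_cases x
      exacts [one_mem _, γ_sq_mem, one_mem _, γ_sq_mem]
    · refine ⟨_, S.hasWreathRecursion_γ_sq, fun x ↦ ?_⟩
      fin_cases x
      exacts [β_sq_mem, one_mem _, one_mem _, β_sq_mem]
  exact ⟨trivial_on_K _ (.inl rfl), trivial_on_K _ (.inr rfl)⟩

lemma β_sq : S.β ^ 2 = 1 := S.β_sq_and_γ_sq.1

lemma γ_sq : S.γ ^ 2 = 1 := S.β_sq_and_γ_sq.2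

lemma hasWreathRecursion_α_mul_γ_sq :
    HasWreathRecursion ((S.α * S.γ) ^ 2) id (fun _ ↦ S.β) := by
  have recursion := S.hasWreathRecursion_α.mul S.hasWreathRecursion_γ
  rw [sq]
  convert recursion.mul recursion using 1
  · exact permSigma_comp_permSigma.symm
  · ext1 x
    fin_cases x <;> simp [permSigma]

lemma α_mul_γ_pow_four : (S.α * S.γ) ^ 4 = 1 := by
  have recursion := S.hasWreathRecursion_α_mul_γ_sq.pow 2
  have sections_eq_one : (fun _ : Alph ↦ S.β) ^ 2 = 1 := funext fun _ ↦ S.β_sq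
  rw [← pow_mul, sections_eq_one] at recursion
  exact recursion.eq_one

lemma hasWreathRecursion_α_mul_β_sq :
    HasWreathRecursion ((S.α * S.β) ^ 2) id
      ![S.γ * S.α, S.α * S.γ, S.γ * S.α, S.α * S.γ] := by
  have recursion := S.hasWreathRecursion_α.mul S.hasWreathRecursion_β
  rw [sq]
  convert recursion.mul recursion using 1
  · exact permSigma_comp_permSigma.symm
  · ext1 x
    fin_cases x <;> simp [permSigma]

lemma α_mul_β_pow_eight : (S.α * S.β) ^ 8 = 1 := by
  have recursion := S.hasWreathRecursion_α_mul_β_sq.pow 4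
  have γα_pow_four : (S.γ * S.α) ^ 4 = 1 := mul_pow_eq_one_comm.1 S.α_mul_γ_pow_four
  have sections_eq_one :
      ![S.γ * S.α, S.α * S.γ, S.γ * S.α, S.α * S.γ] ^ 4 = 1 := by
    ext1 x
    fin_cases x
    exacts [γα_pow_four, S.α_mul_γ_pow_four, γα_pow_four, S.α_mul_γ_pow_four]
  rw [← pow_mul, sections_eq_one] at recursion
  exact recursion.eq_one

lemma hasWreathRecursion_β_mul_γ :
    HasWreathRecursion (S.β * S.γ) id ![S.α * S.β, S.γ, S.α, S.γ * S.β] := by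
  convert S.hasWreathRecursion_β.mul S.hasWreathRecursion_γ using 1
  · exact (Function.comp_id id).symm
  · ext1 x
    fin_cases x <;> simp

lemma inv_β_mul_γ : (S.β * S.γ)⁻¹ = S.γ * S.β := by
  have β_inv : S.β⁻¹ = S.β := inv_eq_iff_mul_eq_one.2 (sq S.β ▸ S.β_sq)
  have γ_inv : S.γ⁻¹ = S.γ := inv_eq_iff_mul_eq_one.2 (sq S.γ ▸ S.γ_sq)
  rw [mul_inv_rev, β_inv, γ_inv]

lemma hasWreathRecursion_β_mul_γ_pow_eight :
    HasWreathRecursion ((S.β * S.γ) ^ 8) id ![1, 1, 1, ((S.β * S.γ) ^ 8)⁻¹] := by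
  have α_pow_eight : S.α ^ 8 = 1 := by rw [pow_mul S.α 2 4, S.α_sq, one_pow]
  have γ_pow_eight : S.γ ^ 8 = 1 := by rw [pow_mul S.γ 2 4, S.γ_sq, one_pow]
  have γβ_pow_eight : (S.γ * S.β) ^ 8 = ((S.β * S.γ) ^ 8)⁻¹ := by rw [← inv_β_mul_γ, inv_pow]
  convert S.hasWreathRecursion_β_mul_γ.pow 8 using 1
  ext1 x
  fin_cases x
  exacts [S.α_mul_β_pow_eight.symm, γ_pow_eight.symm, α_pow_eight.symm, γβ_pow_eight.symm]

lemma β_mul_γ_pow_eight : (S.β * S.γ) ^ 8 = 1 := by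
  refine eq_one_of_sections_mem_closure (K := {(S.β * S.γ) ^ 8}) ?_ _ rfl
  rintro _ rfl
  refine ⟨_, S.hasWreathRecursion_β_mul_γ_pow_eight, fun x ↦ ?_⟩
  have inv_mem_closure := inv_mem (Subgroup.mem_closure_singleton_self ((S.β * S.γ) ^ 8))
  fin_cases x
  exacts [one_mem _, one_mem _, one_mem _, inv_mem_closure]

end NekSystem

/-- In the group Γ the relations (α∘γ)⁴ = id, (α∘β)⁸ = id and (β∘γ)⁸ = id hold. -/
theorem statement2 (S : NekSystem) :
    (S.α * S.γ) ^ 4 = 1 ∧ (S.α * S.β) ^ 8 = 1 ∧ (S.β * S.γ) ^ 8 = 1 :=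
  ⟨S.α_mul_γ_pow_four, S.α_mul_β_pow_eight, S.β_mul_γ_pow_eight⟩
end

section
/- The group Γ is contracting with nucleus N: (i) N is state-closed, i.e. for every g ∈ N and every letter x ∈ X the section g|_x belongs to N; (ii) for every g ∈ Γ there exists n₀ such that for every word v ∈ X* of length at least n₀ the section g|_v belongs to N; and (iii) N is the smallest subset of Γ satisfying (ii), i.e. every subset N' ⊆ Γ such that for each g ∈ Γ all sections g|_v at sufficiently long words v lie in N' must contain N. -/
/-- `h` is the section of `g` at the word `v`: `g (v ++ w) = g v ++ h w` for all `w`.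
(Elements of Γ preserve lengths and prefixes, so sections exist and are unique.) -/
def IsSection (g : Equiv.Perm Word) (v : Word) (h : Equiv.Perm Word) : Prop :=
  ∀ w : Word, g (v ++ w) = g v ++ h w

/-- The group Γ = ⟨α, β, γ, a, b, c⟩. -/
def Gam (S : NekSystem) : Subgroup (Equiv.Perm Word) :=
  Subgroup.closure {S.α, S.β, S.γ, S.a, S.b, S.c}

/-- The nucleus N = Γ_A ∪ Γ_B ∪ Γ_C ∪ Γ_{A₁} ∪ Γ_{B₁} ∪ Γ_{C₁}. -/
def Nuc (S : NekSystem) : Set (Equiv.Perm Word) :=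
  ↑(Subgroup.closure {S.β, S.γ, S.b, S.c}) ∪
  ↑(Subgroup.closure {S.α, S.γ, S.a, S.c}) ∪
  ↑(Subgroup.closure {S.α, S.β, S.a, S.b}) ∪
  ↑(Subgroup.closure {S.α, S.b, S.c}) ∪
  ↑(Subgroup.closure {S.β, S.a, S.c * S.γ}) ∪
  ↑(Subgroup.closure {S.γ, S.a * S.α, S.b * S.β})

/-! ### Wreath recursions over an arbitrary alphabet -/

section Wreath

variable {X : Type*} {g g' t : Equiv.Perm (List X)} {p p' : Equiv.Perm X}
  {h h' k : X → Equiv.Perm (List X)}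

/-- The wreath recursion `g = p (h x)_{x ∈ X}`: the bijection `g` acts on the first letter by `p`
and on the words below the letter `x` by `h x`. -/
structure IsWreath (g : Equiv.Perm (List X)) (p : Equiv.Perm X) (h : X → Equiv.Perm (List X)) :
    Prop where
  nil : g [] = []
  cons (x : X) (w : List X) : g (x :: w) = p x :: h x w

namespace IsWreath

theorem one : IsWreath (1 : Equiv.Perm (List X)) 1 (fun _ => 1) :=
  ⟨rfl, fun _ _ => rfl⟩

theorem mul (hg : IsWreath g p h) (hg' : IsWreath g' p' h') :
    IsWreath (g * g') (p * p') (fun x => h (p' x) * h' x) :=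
  ⟨by simp [hg.nil, hg'.nil], fun x w => by simp [hg.cons, hg'.cons]⟩

theorem inv (hg : IsWreath g p h) : IsWreath g⁻¹ p⁻¹ (fun x => (h (p⁻¹ x))⁻¹) :=
  ⟨by rw [Equiv.Perm.inv_eq_iff_eq, hg.nil],
    fun x w => by rw [Equiv.Perm.inv_eq_iff_eq, hg.cons]; simp⟩

end IsWreath

/-- The subgroup of bijections with a wreath recursion whose component at each letter `x` lies in
`K x` and whose action on the letters preserves the level sets of `K`. Without the last condition
the set would not be closed under multiplication. -/
def wreathSubgroup (K : X → Subgroup (Equiv.Perm (List X))) :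
    Subgroup (Equiv.Perm (List X)) where
  carrier := {g | ∃ p h, IsWreath g p h ∧ (∀ x, K (p x) = K x) ∧ ∀ x, h x ∈ K x}
  one_mem' := ⟨1, _, .one, fun _ => rfl, fun _ => one_mem _⟩
  mul_mem' := by
    rintro g g' ⟨p, h, hg, hp, hK⟩ ⟨p', h', hg', hp', hK'⟩
    refine ⟨_, _, hg.mul hg', fun x => ?_, fun x => mul_mem ?_ (hK' x)⟩
    · rw [Equiv.Perm.mul_apply, hp, hp']
    · rw [← hp' x]
      exact hK _
  inv_mem' := by
    rintro g ⟨p, h, hg, hp, hK⟩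
    have hp_inv (x : X) : K (p⁻¹ x) = K x := by simpa using (hp (p⁻¹ x)).symm
    refine ⟨_, _, hg.inv, hp_inv, fun x => inv_mem ?_⟩
    rw [← hp_inv]
    exact hK _

theorem IsWreath.mem_wreathSubgroup {K : X → Subgroup (Equiv.Perm (List X))}
    (hg : IsWreath g p h) (hp : ∀ x, K (p x) = K x) (hK : ∀ x, h x ∈ K x) :
    g ∈ wreathSubgroup K :=
  ⟨p, h, hg, hp, hK⟩

theorem IsWreath.mem_wreathSubgroup_of_one {K : X → Subgroup (Equiv.Perm (List X))}
    (hg : IsWreath g 1 h) (hK : ∀ x, h x ∈ K x) : g ∈ wreathSubgroup K :=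
  hg.mem_wreathSubgroup (fun _ => rfl) hK

/-- A set of bijections is state-closed if each of its elements has a wreath recursion with
components in the set. -/
def IsStateClosed (N : Set (Equiv.Perm (List X))) : Prop :=
  ∀ g ∈ N, ∃ p h, IsWreath g p h ∧ ∀ x, h x ∈ N

/-- `ContractsTo N g`: repeatedly passing from `g` to the components of wreath recursions leads into
`N` along every branch. -/
inductive ContractsTo (N : Set (Equiv.Perm (List X))) : Equiv.Perm (List X) → Prop
  | of_mem {g : Equiv.Perm (List X)} (hg : g ∈ N) : ContractsTo N g
  | of_components {g : Equiv.Perm (List X)} {p : Equiv.Perm X} {h : X → Equiv.Perm (List X)}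
      (hg : IsWreath g p h) (hh : ∀ x, ContractsTo N (h x)) : ContractsTo N g

/-- The submonoid of those `t` for which right multiplication by `t` preserves contraction to
`N`. -/
def contractionMultipliers (N : Set (Equiv.Perm (List X))) :
    Submonoid (Equiv.Perm (List X)) where
  carrier := {t | ∀ g, ContractsTo N g → ContractsTo N (g * t)}
  one_mem' g hg := by rwa [mul_one]
  mul_mem' {s t} hs ht g hg := by
    rw [← mul_assoc]
    exact ht _ (hs g hg)

variable {N T : Set (Equiv.Perm (List X))}

theorem subset_contractionMultipliers (hN : ∀ t ∈ T, ∀ g ∈ N, ContractsTo N (g * t))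
    (hT : ∀ t ∈ T, ∃ q k, IsWreath t q k ∧
      ∀ x, ∃ s ∈ insert 1 T, ∃ m ∈ contractionMultipliers N, s * m = k x) :
    T ⊆ contractionMultipliers N := by
  intro t ht g hg
  induction hg generalizing t with
  | of_mem hg => exact hN t ht _ hg
  | @of_components g p h hg hh ih =>
    obtain ⟨q, k, htk, hk⟩ := hT t ht
    refine .of_components (hg.mul htk) fun x => ?_
    obtain ⟨s, hs, m, hm, hsm⟩ := hk x
    have h_mul_s : ContractsTo N (h (q x) * s) := by
      rcases hs with rfl | hs
      · rw [mul_one]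
        exact hh _
      · exact ih _ hs
    rw [← hsm, ← mul_assoc]
    exact hm _ h_mul_s

theorem IsStateClosed.mem_contractionMultipliers (hN : IsStateClosed N)
    (ht : IsWreath t p (fun _ => 1)) : t ∈ contractionMultipliers N := by
  refine Set.singleton_subset_iff.1 (subset_contractionMultipliers ?_ ?_)
  · rintro _ rfl g hg
    obtain ⟨q, h, hgh, hh⟩ := hN g hg
    exact .of_components (hgh.mul ht) fun x => .of_mem (by rw [mul_one]; exact hh _)
  · rintro _ rfl
    exact ⟨p, _, ht, fun _ => ⟨1, by simp, 1, one_mem _, mul_one 1⟩⟩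

theorem contractsTo_of_mem_closure (h1 : 1 ∈ N) (hT : T ⊆ contractionMultipliers N)
    (hT_inv : T⁻¹ ⊆ contractionMultipliers N) (hg : g ∈ Subgroup.closure T) :
    ContractsTo N g := by
  have hg' : g ∈ Submonoid.closure (T ∪ T⁻¹) := by
    rwa [← Subgroup.closure_toSubmonoid, Subgroup.mem_toSubmonoid]
  have hg_mult : g ∈ contractionMultipliers N :=
    Submonoid.closure_le.2 (Set.union_subset hT hT_inv) hg'
  simpa using hg_mult 1 (.of_mem h1)

/-- All elements of the coset `K t` contract to `N`. -/
def CosetContractsTo (N : Set (Equiv.Perm (List X))) (K : Subgroup (Equiv.Perm (List X)))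
    (t : Equiv.Perm (List X)) : Prop :=
  ∀ g ∈ K, ContractsTo N (g * t)

namespace CosetContractsTo

variable {K L : Subgroup (Equiv.Perm (List X))}

theorem of_mem (hL : (L : Set (Equiv.Perm (List X))) ⊆ N) (hKL : K ≤ L) (ht : t ∈ L) :
    CosetContractsTo N K t :=
  fun _ hg => .of_mem (hL (mul_mem (hKL hg) ht))

theorem of_mem_multipliers (hK : (K : Set (Equiv.Perm (List X))) ⊆ N)
    (ht : t ∈ contractionMultipliers N) : CosetContractsTo N K t :=
  fun g hg => ht g (.of_mem (hK hg))

theorem mul_right (hK : CosetContractsTo N K t) {m : Equiv.Perm (List X)}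
    (hm : m ∈ contractionMultipliers N) : CosetContractsTo N K (t * m) := fun g hg => by
  rw [← mul_assoc]
  exact hm _ (hK g hg)

theorem of_components {κ : X → Subgroup (Equiv.Perm (List X))} (hK : K ≤ wreathSubgroup κ)
    (ht : IsWreath t 1 k) (hκ : ∀ x, CosetContractsTo N (κ x) (k x)) :
    CosetContractsTo N K t := fun _ hg => by
  obtain ⟨p, h, hgh, -, hh⟩ := hK hg
  exact .of_components (hgh.mul ht) fun x => hκ x _ (hh x)

end CosetContractsTo

end Wreath

/-! ### Sections -/

section Sections

variable {g h h' : Equiv.Perm Word} {u v : Word} {N : Set (Equiv.Perm Word)}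

theorem isSection_nil (hg : g [] = []) : IsSection g [] g := fun w => by
  rw [hg, List.nil_append, List.nil_append]

namespace IsSection

theorem apply_nil (hs : IsSection g v h) : h [] = [] := by
  simpa using hs []

theorem trans (hs : IsSection g u h) (hs' : IsSection h v h') : IsSection g (u ++ v) h' :=
  fun w => by rw [List.append_assoc, hs, hs', hs v, List.append_assoc]

theorem unique (hs : IsSection g v h) (hs' : IsSection g v h') : h = h' :=
  Equiv.ext fun w => List.append_cancel_left ((hs w).symm.trans (hs' w))

end IsSection

theorem IsWreath.isSection {p : Equiv.Perm Alph} {h : Alph → Equiv.Perm Word}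
    (hg : IsWreath g p h) {x : Alph} (hx : h x [] = []) : IsSection g [x] (h x) := fun w => by
  simp [hg.cons, hx]

theorem IsStateClosed.apply_nil (hN : IsStateClosed N) (hg : g ∈ N) : g [] = [] := by
  obtain ⟨p, h, hgh, -⟩ := hN g hg
  exact hgh.nil

theorem IsStateClosed.exists_isSection (hN : IsStateClosed N) (hg : g ∈ N) (v : Word) :
    ∃ h ∈ N, IsSection g v h := by
  induction v generalizing g with
  | nil => exact ⟨g, hg, isSection_nil (hN.apply_nil hg)⟩
  | cons x v ih =>
    obtain ⟨p, h, hgh, hh⟩ := hN g hg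
    obtain ⟨k, hk, hs⟩ := ih (hh x)
    exact ⟨k, hk, (hgh.isSection (hN.apply_nil (hh x))).trans hs⟩

theorem ContractsTo.apply_nil (hN : IsStateClosed N) (hg : ContractsTo N g) : g [] = [] := by
  cases hg with
  | of_mem hg => exact hN.apply_nil hg
  | of_components hg _ => exact hg.nil

theorem ContractsTo.exists_depth (hN : IsStateClosed N) (hg : ContractsTo N g) :
    ∃ n : ℕ, ∀ v : Word, n ≤ v.length → ∃ h ∈ N, IsSection g v h := by
  induction hg with
  | of_mem hg => exact ⟨0, fun v _ => hN.exists_isSection hg v⟩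
  | @of_components g p h hg hh ih =>
    choose n hn using ih
    refine ⟨Finset.univ.sup n + 1, fun v hv => ?_⟩
    cases v with
    | nil => simp at hv
    | cons x v =>
      have hx : n x ≤ v.length :=
        (Finset.le_sup (Finset.mem_univ x)).trans (Nat.le_of_succ_le_succ hv)
      obtain ⟨k, hk, hs⟩ := hn x v hx
      exact ⟨k, hk, (hg.isSection ((hh x).apply_nil hN)).trans hs⟩

/-- The pairs `(f, g)` such that `f` fixes the word `v` and has section `g` at `v`. -/
def sectionGraph (v : Word) : Subgroup (Equiv.Perm Word × Equiv.Perm Word) where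
  carrier := {q | q.1 v = v ∧ IsSection q.1 v q.2}
  one_mem' := ⟨rfl, fun _ => rfl⟩
  mul_mem' := by
    rintro ⟨f, g⟩ ⟨f', g'⟩ ⟨hv, hs⟩ ⟨hv', hs'⟩
    simp only [IsSection, hv, hv'] at hs hs'
    exact ⟨by simp [hv, hv'], fun w => by simp [hs, hs', hv, hv']⟩
  inv_mem' := by
    rintro ⟨f, g⟩ ⟨hv, hs⟩
    simp only [IsSection, hv] at hs
    have hv_inv : f⁻¹ v = v := by rw [Equiv.Perm.inv_eq_iff_eq, hv]
    refine ⟨hv_inv, fun w => ?_⟩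
    simp only [Prod.fst_inv, Prod.snd_inv, hv_inv]
    rw [Equiv.Perm.inv_eq_iff_eq, hs]
    simp

/-- The group of sections at `v` of those elements of `H` that fix `v`. -/
def sectionsAt (H : Subgroup (Equiv.Perm Word)) (v : Word) : Subgroup (Equiv.Perm Word) :=
  (sectionGraph v ⊓ H.prod ⊤).map (MonoidHom.snd _ _)

theorem mem_sectionsAt {H : Subgroup (Equiv.Perm Word)} :
    g ∈ sectionsAt H v ↔ ∃ f ∈ H, f v = v ∧ IsSection f v g := by
  simp only [sectionsAt, sectionGraph, Subgroup.mem_map, Subgroup.mem_inf, Subgroup.mem_prod]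
  constructor
  · rintro ⟨⟨f, _⟩, ⟨hs, hf, -⟩, rfl⟩
    exact ⟨f, hf, hs⟩
  · rintro ⟨f, hf, hs⟩
    exact ⟨(f, g), ⟨hs, hf, trivial⟩, rfl⟩

/-- The group of bijections that fix `v` and are their own section at `v`. -/
def selfSections (v : Word) : Subgroup (Equiv.Perm Word) :=
  (sectionGraph v).comap ((MonoidHom.id _).prod (MonoidHom.id _))

theorem mem_selfSections : g ∈ selfSections v ↔ g v = v ∧ IsSection g v g := Iff.rfl

/-- `g` is the section of one fixed element of `G` at arbitrarily long words. -/
def IsRecurrent (G : Subgroup (Equiv.Perm Word)) (g : Equiv.Perm Word) : Prop :=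
  ∃ f ∈ G, ∀ n : ℕ, ∃ v : Word, n ≤ v.length ∧ IsSection f v g

variable {G H K : Subgroup (Equiv.Perm Word)}

theorem isRecurrent_of_mem_selfSections (hv : v ≠ []) (hgG : g ∈ G) (hg : g ∈ selfSections v) :
    IsRecurrent G g := by
  obtain ⟨-, hs⟩ := mem_selfSections.1 hg
  refine ⟨g, hgG, fun n => ?_⟩
  induction n with
  | zero => exact ⟨[], le_rfl, isSection_nil hs.apply_nil⟩
  | succ n ih =>
    obtain ⟨u, hu, hsu⟩ := ih
    have hv_pos : 0 < v.length := List.length_pos_iff.2 hv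
    exact ⟨u ++ v, by rw [List.length_append]; lia, hsu.trans hs⟩

theorem IsRecurrent.of_isSection (hg : IsRecurrent G g) (hs : IsSection g u h) :
    IsRecurrent G h := by
  obtain ⟨f, hf, hfg⟩ := hg
  refine ⟨f, hf, fun n => ?_⟩
  obtain ⟨v, hv, hsv⟩ := hfg n
  exact ⟨v ++ u, by rw [List.length_append]; lia, hsv.trans hs⟩

theorem isRecurrent_of_le_sectionsAt (hH : ∀ f ∈ H, IsRecurrent G f) (hK : K ≤ sectionsAt H v) :
    ∀ g ∈ K, IsRecurrent G g := fun _ hg => by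
  obtain ⟨f, hf, -, hs⟩ := mem_sectionsAt.1 (hK hg)
  exact (hH f hf).of_isSection hs

theorem IsRecurrent.mem_of_exists_depth (hg : IsRecurrent G g)
    (hN : ∀ f ∈ G, ∃ n : ℕ, ∀ v : Word, n ≤ v.length → ∃ h ∈ N, IsSection f v h) : g ∈ N := by
  obtain ⟨f, hf, hfg⟩ := hg
  obtain ⟨n, hn⟩ := hN f hf
  obtain ⟨v, hv, hs⟩ := hfg n
  obtain ⟨h, hh, hs'⟩ := hn v hv
  rwa [hs.unique hs']

end Sections

/-! ### The generators -/

theorem forall_alph {P : Alph → Prop} : (∀ x, P x) ↔ P 0 ∧ P 1 ∧ P 2 ∧ P 3 :=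
  ⟨fun h => ⟨h 0, h 1, h 2, h 3⟩, fun ⟨h0, h1, h2, h3⟩ x => by fin_cases x <;> assumption⟩

@[simp] theorem permSigma_permSigma : ∀ x, permSigma (permSigma x) = x := by decide

@[simp] theorem permPi_permPi : ∀ x, permPi (permPi x) = x := by decide

/-- `permSigma` as a permutation. -/
def sigmaPerm : Equiv.Perm Alph :=
  ⟨permSigma, permSigma, permSigma_permSigma, permSigma_permSigma⟩

/-- `permPi` as a permutation. -/
def piPerm : Equiv.Perm Alph :=
  ⟨permPi, permPi, permPi_permPi, permPi_permPi⟩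

namespace NekSystem

variable (S : NekSystem)

@[simp] theorem α_α_apply (w : Word) : S.α (S.α w) = w := by
  cases w <;> simp

@[simp] theorem a_a_apply (w : Word) : S.a (S.a w) = w := by
  cases w <;> simp

theorem a_α_apply (w : Word) : S.a (S.α w) = S.α (S.a w) := by
  have permPi_permSigma : ∀ x, permPi (permSigma x) = permSigma (permPi x) := by decide
  cases w <;> simp [permPi_permSigma]

theorem β_β_apply_and_γ_γ_apply (w : Word) : S.β (S.β w) = w ∧ S.γ (S.γ w) = w := by
  induction w with
  | nil => simp
  | cons x w ih => fin_cases x <;> simp [ih]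

@[simp] theorem β_β_apply (w : Word) : S.β (S.β w) = w := (S.β_β_apply_and_γ_γ_apply w).1

@[simp] theorem γ_γ_apply (w : Word) : S.γ (S.γ w) = w := (S.β_β_apply_and_γ_γ_apply w).2

theorem c_α_apply (w : Word) : S.c (S.α w) = S.α (S.c w) := by
  cases w with
  | nil => simp
  | cons x w => fin_cases x <;> simp [permSigma]

theorem α_a_γ_apply (w : Word) : S.α (S.a (S.γ w)) = S.γ (S.α (S.a w)) := by
  cases w with
  | nil => simp
  | cons x w => fin_cases x <;> simp [permSigma, permPi]

theorem b_β_apply_and_c_γ_apply (w : Word) :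
    S.b (S.β w) = S.β (S.b w) ∧ S.c (S.γ w) = S.γ (S.c w) := by
  induction w with
  | nil => simp
  | cons x w ih => fin_cases x <;> simp [S.a_α_apply, S.α_a_γ_apply, S.c_α_apply, ih]

theorem b_b_apply_and_c_c_apply (w : Word) : S.b (S.b w) = w ∧ S.c (S.c w) = w := by
  induction w with
  | nil => simp
  | cons x w ih => fin_cases x <;> simp [S.a_α_apply, S.b_β_apply_and_c_γ_apply, ih]

/-- The generating set `{α, β, γ, a, b, c}` of `Γ`. -/
def generators : Set (Equiv.Perm Word) := {S.α, S.β, S.γ, S.a, S.b, S.c}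

theorem inv_eq_self_of_mem_generators {s : Equiv.Perm Word} (hs : s ∈ S.generators) :
    s⁻¹ = s := by
  have hs_sq : s * s = 1 := by
    rcases hs with rfl | rfl | rfl | rfl | rfl | rfl
    exacts [Equiv.ext S.α_α_apply, Equiv.ext S.β_β_apply, Equiv.ext S.γ_γ_apply,
      Equiv.ext S.a_a_apply, Equiv.ext fun w => (S.b_b_apply_and_c_c_apply w).1,
      Equiv.ext fun w => (S.b_b_apply_and_c_c_apply w).2]
  exact inv_eq_of_mul_eq_one_left hs_sq

theorem isWreath_α : IsWreath S.α sigmaPerm (fun _ => 1) := ⟨S.hαnil, S.hα⟩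

theorem isWreath_a : IsWreath S.a piPerm (fun _ => 1) := ⟨S.hanil, S.ha⟩

theorem isWreath_β : IsWreath S.β 1 ![S.α, S.γ, S.α, S.γ] :=
  ⟨S.hβnil, forall_alph.2 ⟨S.hβ0, S.hβ1, S.hβ2, S.hβ3⟩⟩

theorem isWreath_γ : IsWreath S.γ 1 ![S.β, 1, 1, S.β] :=
  ⟨S.hγnil, forall_alph.2 ⟨S.hγ0, S.hγ1, S.hγ2, S.hγ3⟩⟩

theorem isWreath_b : IsWreath S.b 1 ![S.a * S.α, S.a * S.α, S.c, S.c] :=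
  ⟨S.hbnil, forall_alph.2 ⟨S.hb0, S.hb1, S.hb2, S.hb3⟩⟩

theorem isWreath_c : IsWreath S.c 1 ![S.b * S.β, S.b * S.β, S.b, S.b] :=
  ⟨S.hcnil, forall_alph.2 ⟨S.hc0, S.hc1, S.hc2, S.hc3⟩⟩

theorem isWreath_aα : IsWreath (S.a * S.α) (piPerm * sigmaPerm) (fun _ => 1) := by
  simpa using S.isWreath_a.mul S.isWreath_α

theorem isWreath_bβ :
    IsWreath (S.b * S.β) 1 ![S.a, S.a * S.α * S.γ, S.c * S.α, S.c * S.γ] :=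
  ⟨by simp, by simp [forall_alph]⟩

theorem isWreath_cγ : IsWreath (S.c * S.γ) 1 ![S.b, S.b * S.β, S.b, S.b * S.β] :=
  ⟨by simp, by simp [forall_alph]⟩

end NekSystem

/-! ### The pieces of the nucleus -/

/-- The labels of the six subgroups whose union is the nucleus. -/
inductive Piece
  | A | B | C | A₁ | B₁ | C₁

namespace NekSystem

variable (S : NekSystem)

/-- The subgroup `Γ_i` for `i ∈ {A, B, C, A₁, B₁, C₁}`. -/
def piece : Piece → Subgroup (Equiv.Perm Word)
  | .A => Subgroup.closure {S.β, S.γ, S.b, S.c}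
  | .B => Subgroup.closure {S.α, S.γ, S.a, S.c}
  | .C => Subgroup.closure {S.α, S.β, S.a, S.b}
  | .A₁ => Subgroup.closure {S.α, S.b, S.c}
  | .B₁ => Subgroup.closure {S.β, S.a, S.c * S.γ}
  | .C₁ => Subgroup.closure {S.γ, S.a * S.α, S.b * S.β}

theorem mem_nuc {g : Equiv.Perm Word} : g ∈ Nuc S ↔ ∃ i, g ∈ S.piece i := by
  constructor
  · rintro (((((h | h) | h) | h) | h) | h)
    exacts [⟨.A, h⟩, ⟨.B, h⟩, ⟨.C, h⟩, ⟨.A₁, h⟩, ⟨.B₁, h⟩, ⟨.C₁, h⟩]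
  · rintro ⟨i, h⟩
    cases i <;> simp only [piece] at h <;> simp [Nuc, h]

theorem piece_subset_nuc (i : Piece) : (S.piece i : Set (Equiv.Perm Word)) ⊆ Nuc S :=
  fun _ hg => S.mem_nuc.2 ⟨i, hg⟩

@[simp] theorem generators_mem_piece_A :
    S.β ∈ S.piece .A ∧ S.γ ∈ S.piece .A ∧ S.b ∈ S.piece .A ∧ S.c ∈ S.piece .A := by
  refine ⟨?_, ?_, ?_, ?_⟩ <;> exact Subgroup.subset_closure (by simp)

@[simp] theorem generators_mem_piece_B :
    S.α ∈ S.piece .B ∧ S.γ ∈ S.piece .B ∧ S.a ∈ S.piece .B ∧ S.c ∈ S.piece .B := by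
  refine ⟨?_, ?_, ?_, ?_⟩ <;> exact Subgroup.subset_closure (by simp)

@[simp] theorem generators_mem_piece_C :
    S.α ∈ S.piece .C ∧ S.β ∈ S.piece .C ∧ S.a ∈ S.piece .C ∧ S.b ∈ S.piece .C := by
  refine ⟨?_, ?_, ?_, ?_⟩ <;> exact Subgroup.subset_closure (by simp)

@[simp] theorem generators_mem_piece_A₁ :
    S.α ∈ S.piece .A₁ ∧ S.b ∈ S.piece .A₁ ∧ S.c ∈ S.piece .A₁ := by
  refine ⟨?_, ?_, ?_⟩ <;> exact Subgroup.subset_closure (by simp)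

@[simp] theorem generators_mem_piece_B₁ :
    S.β ∈ S.piece .B₁ ∧ S.a ∈ S.piece .B₁ ∧ S.c * S.γ ∈ S.piece .B₁ := by
  refine ⟨?_, ?_, ?_⟩ <;> exact Subgroup.subset_closure (by simp)

@[simp] theorem generators_mem_piece_C₁ :
    S.γ ∈ S.piece .C₁ ∧ S.a * S.α ∈ S.piece .C₁ ∧ S.b * S.β ∈ S.piece .C₁ := by
  refine ⟨?_, ?_, ?_⟩ <;> exact Subgroup.subset_closure (by simp)

/-- The subgroup containing the sections of the elements of `Γ_i` at each letter. -/
def sectionPiece : Piece → Alph → Subgroup (Equiv.Perm Word)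
  | .A => ![S.piece .C, S.piece .C₁, S.piece .A₁, S.piece .A]
  | .B => fun _ => S.piece .A ⊓ S.piece .C
  | .C => fun _ => S.piece .B
  | .A₁ => ![S.piece .C₁ ⊓ S.piece .C, S.piece .C₁ ⊓ S.piece .C,
      S.piece .A₁ ⊓ S.piece .A, S.piece .A₁ ⊓ S.piece .A]
  | .B₁ => ![S.piece .A₁ ⊓ S.piece .C, S.piece .C₁ ⊓ S.piece .A,
      S.piece .A₁ ⊓ S.piece .C, S.piece .C₁ ⊓ S.piece .A]
  | .C₁ => ![S.piece .B₁, S.piece .B, S.piece .B, S.piece .B₁]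

theorem piece_le_wreathSubgroup (i : Piece) : S.piece i ≤ wreathSubgroup (S.sectionPiece i) := by
  cases i <;> rw [piece, Subgroup.closure_le]
  case A =>
    rintro _ (rfl | rfl | rfl | rfl)
    · exact S.isWreath_β.mem_wreathSubgroup_of_one (by simp [forall_alph, sectionPiece])
    · exact S.isWreath_γ.mem_wreathSubgroup_of_one (by simp [forall_alph, sectionPiece])
    · exact S.isWreath_b.mem_wreathSubgroup_of_one (by simp [forall_alph, sectionPiece, mul_mem])
    · exact S.isWreath_c.mem_wreathSubgroup_of_one (by simp [forall_alph, sectionPiece, mul_mem])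
  case B =>
    rintro _ (rfl | rfl | rfl | rfl)
    · exact S.isWreath_α.mem_wreathSubgroup (fun _ => rfl) (fun _ => one_mem _)
    · exact S.isWreath_γ.mem_wreathSubgroup_of_one (by simp [forall_alph, sectionPiece])
    · exact S.isWreath_a.mem_wreathSubgroup (fun _ => rfl) (fun _ => one_mem _)
    · exact S.isWreath_c.mem_wreathSubgroup_of_one (by simp [forall_alph, sectionPiece, mul_mem])
  case C =>
    rintro _ (rfl | rfl | rfl | rfl)
    · exact S.isWreath_α.mem_wreathSubgroup (fun _ => rfl) (fun _ => one_mem _)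
    · exact S.isWreath_β.mem_wreathSubgroup_of_one (by simp [forall_alph, sectionPiece])
    · exact S.isWreath_a.mem_wreathSubgroup (fun _ => rfl) (fun _ => one_mem _)
    · exact S.isWreath_b.mem_wreathSubgroup_of_one (by simp [forall_alph, sectionPiece, mul_mem])
  case A₁ =>
    rintro _ (rfl | rfl | rfl)
    · exact S.isWreath_α.mem_wreathSubgroup (forall_alph.2 ⟨rfl, rfl, rfl, rfl⟩)
        (fun _ => one_mem _)
    · exact S.isWreath_b.mem_wreathSubgroup_of_one (by simp [forall_alph, sectionPiece, mul_mem])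
    · exact S.isWreath_c.mem_wreathSubgroup_of_one (by simp [forall_alph, sectionPiece, mul_mem])
  case B₁ =>
    rintro _ (rfl | rfl | rfl)
    · exact S.isWreath_β.mem_wreathSubgroup_of_one (by simp [forall_alph, sectionPiece])
    · exact S.isWreath_a.mem_wreathSubgroup (forall_alph.2 ⟨rfl, rfl, rfl, rfl⟩)
        (fun _ => one_mem _)
    · exact S.isWreath_cγ.mem_wreathSubgroup_of_one (by simp [forall_alph, sectionPiece, mul_mem])
  case C₁ =>
    rintro _ (rfl | rfl | rfl)
    · exact S.isWreath_γ.mem_wreathSubgroup_of_one (by simp [forall_alph, sectionPiece])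
    · exact S.isWreath_aα.mem_wreathSubgroup (forall_alph.2 ⟨rfl, rfl, rfl, rfl⟩)
        (fun _ => one_mem _)
    · exact S.isWreath_bβ.mem_wreathSubgroup_of_one (by simp [forall_alph, sectionPiece, mul_mem])

theorem exists_sectionPiece_le (i : Piece) (x : Alph) : ∃ j, S.sectionPiece i x ≤ S.piece j := by
  revert x
  cases i
  case A => exact forall_alph.2 ⟨⟨.C, le_rfl⟩, ⟨.C₁, le_rfl⟩, ⟨.A₁, le_rfl⟩, ⟨.A, le_rfl⟩⟩
  case B => exact fun _ => ⟨.A, inf_le_left⟩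
  case C => exact fun _ => ⟨.B, le_rfl⟩
  case A₁ =>
    exact forall_alph.2
      ⟨⟨.C, inf_le_right⟩, ⟨.C, inf_le_right⟩, ⟨.A, inf_le_right⟩, ⟨.A, inf_le_right⟩⟩
  case B₁ =>
    exact forall_alph.2
      ⟨⟨.C, inf_le_right⟩, ⟨.A, inf_le_right⟩, ⟨.C, inf_le_right⟩, ⟨.A, inf_le_right⟩⟩
  case C₁ => exact forall_alph.2 ⟨⟨.B₁, le_rfl⟩, ⟨.B, le_rfl⟩, ⟨.B, le_rfl⟩, ⟨.B₁, le_rfl⟩⟩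

theorem isStateClosed_nuc : IsStateClosed (Nuc S) := fun g hg => by
  obtain ⟨i, hi⟩ := S.mem_nuc.1 hg
  obtain ⟨p, h, hgh, -, hh⟩ := S.piece_le_wreathSubgroup i hi
  refine ⟨p, h, hgh, fun x => ?_⟩
  obtain ⟨j, hj⟩ := S.exists_sectionPiece_le i x
  exact S.piece_subset_nuc j (hj (hh x))

/-! ### Contraction -/

theorem cosetContractsTo_of_mem (i : Piece) {K : Subgroup (Equiv.Perm Word)} {t : Equiv.Perm Word}
    (hK : K ≤ S.piece i) (ht : t ∈ S.piece i) : CosetContractsTo (Nuc S) K t :=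
  .of_mem (S.piece_subset_nuc i) hK ht

theorem cosetContractsTo_of_mem_multipliers (i : Piece) {K : Subgroup (Equiv.Perm Word)}
    {t : Equiv.Perm Word} (hK : K ≤ S.piece i) (ht : t ∈ contractionMultipliers (Nuc S)) :
    CosetContractsTo (Nuc S) K t :=
  .of_mem_multipliers (fun _ hg => S.piece_subset_nuc i (hK hg)) ht

theorem α_mem_contractionMultipliers : S.α ∈ contractionMultipliers (Nuc S) :=
  S.isStateClosed_nuc.mem_contractionMultipliers S.isWreath_α

theorem a_mem_contractionMultipliers : S.a ∈ contractionMultipliers (Nuc S) :=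
  S.isStateClosed_nuc.mem_contractionMultipliers S.isWreath_a

theorem cosetContractsTo_B₁_γ : CosetContractsTo (Nuc S) (S.piece .B₁) S.γ :=
  .of_components (S.piece_le_wreathSubgroup .B₁) S.isWreath_γ <| forall_alph.2
    ⟨S.cosetContractsTo_of_mem .C inf_le_right (by simp),
      S.cosetContractsTo_of_mem .A inf_le_right (one_mem _),
      S.cosetContractsTo_of_mem .C inf_le_right (one_mem _),
      S.cosetContractsTo_of_mem .A inf_le_right (by simp)⟩

theorem cosetContractsTo_β : ∀ i, CosetContractsTo (Nuc S) (S.piece i) S.β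
  | .A => S.cosetContractsTo_of_mem .A le_rfl (by simp)
  | .B => .of_components (S.piece_le_wreathSubgroup .B) S.isWreath_β <| forall_alph.2
      ⟨S.cosetContractsTo_of_mem .C inf_le_right (by simp),
        S.cosetContractsTo_of_mem .A inf_le_left (by simp),
        S.cosetContractsTo_of_mem .C inf_le_right (by simp),
        S.cosetContractsTo_of_mem .A inf_le_left (by simp)⟩
  | .C => S.cosetContractsTo_of_mem .C le_rfl (by simp)
  | .A₁ => .of_components (S.piece_le_wreathSubgroup .A₁) S.isWreath_β <| forall_alph.2
      ⟨S.cosetContractsTo_of_mem .C inf_le_right (by simp),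
        S.cosetContractsTo_of_mem .C₁ inf_le_left (by simp),
        S.cosetContractsTo_of_mem .A₁ inf_le_left (by simp),
        S.cosetContractsTo_of_mem .A inf_le_right (by simp)⟩
  | .B₁ => S.cosetContractsTo_of_mem .B₁ le_rfl (by simp)
  | .C₁ => .of_components (S.piece_le_wreathSubgroup .C₁) S.isWreath_β <| forall_alph.2
      ⟨S.cosetContractsTo_of_mem_multipliers .B₁ le_rfl S.α_mem_contractionMultipliers,
        S.cosetContractsTo_of_mem .B le_rfl (by simp),
        S.cosetContractsTo_of_mem .B le_rfl (by simp),
        S.cosetContractsTo_B₁_γ⟩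

theorem cosetContractsTo_γ : ∀ i, CosetContractsTo (Nuc S) (S.piece i) S.γ
  | .A => S.cosetContractsTo_of_mem .A le_rfl (by simp)
  | .B => S.cosetContractsTo_of_mem .B le_rfl (by simp)
  | .C => .of_components (S.piece_le_wreathSubgroup .C) S.isWreath_γ <| forall_alph.2
      ⟨S.cosetContractsTo_β .B, S.cosetContractsTo_of_mem .B le_rfl (one_mem _),
        S.cosetContractsTo_of_mem .B le_rfl (one_mem _), S.cosetContractsTo_β .B⟩
  | .A₁ => .of_components (S.piece_le_wreathSubgroup .A₁) S.isWreath_γ <| forall_alph.2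
      ⟨S.cosetContractsTo_of_mem .C inf_le_right (by simp),
        S.cosetContractsTo_of_mem .C inf_le_right (one_mem _),
        S.cosetContractsTo_of_mem .A inf_le_right (one_mem _),
        S.cosetContractsTo_of_mem .A inf_le_right (by simp)⟩
  | .B₁ => S.cosetContractsTo_B₁_γ
  | .C₁ => S.cosetContractsTo_of_mem .C₁ le_rfl (by simp)

theorem βγ_subset_contractionMultipliers :
    {S.β, S.γ} ⊆ (contractionMultipliers (Nuc S) : Set (Equiv.Perm Word)) := by
  have hα := S.α_mem_contractionMultipliers
  have h1 := one_mem (contractionMultipliers (Nuc S))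
  apply subset_contractionMultipliers
  · rintro _ (rfl | rfl) g hg <;> obtain ⟨i, hi⟩ := S.mem_nuc.1 hg
    exacts [S.cosetContractsTo_β i g hi, S.cosetContractsTo_γ i g hi]
  · rintro _ (rfl | rfl)
    · exact ⟨1, _, S.isWreath_β, forall_alph.2
        ⟨⟨1, by simp, S.α, hα, one_mul _⟩, ⟨S.γ, by simp, 1, h1, mul_one _⟩,
          ⟨1, by simp, S.α, hα, one_mul _⟩, ⟨S.γ, by simp, 1, h1, mul_one _⟩⟩⟩
    · exact ⟨1, _, S.isWreath_γ, forall_alph.2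
        ⟨⟨S.β, by simp, 1, h1, mul_one _⟩, ⟨1, by simp, 1, h1, one_mul _⟩,
          ⟨1, by simp, 1, h1, one_mul _⟩, ⟨S.β, by simp, 1, h1, mul_one _⟩⟩⟩

theorem β_mem_contractionMultipliers : S.β ∈ contractionMultipliers (Nuc S) :=
  S.βγ_subset_contractionMultipliers (by simp)

theorem aα_mem_contractionMultipliers : S.a * S.α ∈ contractionMultipliers (Nuc S) :=
  mul_mem S.a_mem_contractionMultipliers S.α_mem_contractionMultipliers

theorem cosetContractsTo_B₁_c : CosetContractsTo (Nuc S) (S.piece .B₁) S.c :=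
  .of_components (S.piece_le_wreathSubgroup .B₁) S.isWreath_c <| forall_alph.2
    ⟨S.cosetContractsTo_of_mem .C inf_le_right (by simp [mul_mem]),
      S.cosetContractsTo_of_mem .A inf_le_right (by simp [mul_mem]),
      S.cosetContractsTo_of_mem .C inf_le_right (by simp),
      S.cosetContractsTo_of_mem .A inf_le_right (by simp)⟩

theorem cosetContractsTo_b : ∀ i, CosetContractsTo (Nuc S) (S.piece i) S.b
  | .A => S.cosetContractsTo_of_mem .A le_rfl (by simp)
  | .B => .of_components (S.piece_le_wreathSubgroup .B) S.isWreath_b <| forall_alph.2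
      ⟨S.cosetContractsTo_of_mem .C inf_le_right (by simp [mul_mem]),
        S.cosetContractsTo_of_mem .C inf_le_right (by simp [mul_mem]),
        S.cosetContractsTo_of_mem .A inf_le_left (by simp),
        S.cosetContractsTo_of_mem .A inf_le_left (by simp)⟩
  | .C => S.cosetContractsTo_of_mem .C le_rfl (by simp)
  | .A₁ => S.cosetContractsTo_of_mem .A₁ le_rfl (by simp)
  | .B₁ => .of_components (S.piece_le_wreathSubgroup .B₁) S.isWreath_b <| forall_alph.2
      ⟨S.cosetContractsTo_of_mem .C inf_le_right (by simp [mul_mem]),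
        S.cosetContractsTo_of_mem .C₁ inf_le_left (by simp),
        S.cosetContractsTo_of_mem .A₁ inf_le_left (by simp),
        S.cosetContractsTo_of_mem .A inf_le_right (by simp)⟩
  | .C₁ => .of_components (S.piece_le_wreathSubgroup .C₁) S.isWreath_b <| forall_alph.2
      ⟨S.cosetContractsTo_of_mem_multipliers .B₁ le_rfl S.aα_mem_contractionMultipliers,
        S.cosetContractsTo_of_mem .B le_rfl (by simp [mul_mem]),
        S.cosetContractsTo_of_mem .B le_rfl (by simp), S.cosetContractsTo_B₁_c⟩

theorem cosetContractsTo_bβ (i : Piece) : CosetContractsTo (Nuc S) (S.piece i) (S.b * S.β) :=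
  (S.cosetContractsTo_b i).mul_right S.β_mem_contractionMultipliers

theorem cosetContractsTo_c : ∀ i, CosetContractsTo (Nuc S) (S.piece i) S.c
  | .A => S.cosetContractsTo_of_mem .A le_rfl (by simp)
  | .B => S.cosetContractsTo_of_mem .B le_rfl (by simp)
  | .C => .of_components (S.piece_le_wreathSubgroup .C) S.isWreath_c <| forall_alph.2
      ⟨S.cosetContractsTo_bβ .B,
        S.cosetContractsTo_bβ .B,
        S.cosetContractsTo_b .B,
        S.cosetContractsTo_b .B⟩
  | .A₁ => S.cosetContractsTo_of_mem .A₁ le_rfl (by simp)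
  | .B₁ => S.cosetContractsTo_B₁_c
  | .C₁ => .of_components (S.piece_le_wreathSubgroup .C₁) S.isWreath_c <| forall_alph.2
      ⟨S.cosetContractsTo_bβ .B₁,
        S.cosetContractsTo_bβ .B,
        S.cosetContractsTo_b .B,
        S.cosetContractsTo_b .B₁⟩

theorem bc_subset_contractionMultipliers :
    {S.b, S.c} ⊆ (contractionMultipliers (Nuc S) : Set (Equiv.Perm Word)) := by
  have haα := S.aα_mem_contractionMultipliers
  have hβ := S.β_mem_contractionMultipliers
  have h1 := one_mem (contractionMultipliers (Nuc S))
  apply subset_contractionMultipliers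
  · rintro _ (rfl | rfl) g hg <;> obtain ⟨i, hi⟩ := S.mem_nuc.1 hg
    exacts [S.cosetContractsTo_b i g hi, S.cosetContractsTo_c i g hi]
  · rintro _ (rfl | rfl)
    · exact ⟨1, _, S.isWreath_b, forall_alph.2
        ⟨⟨1, by simp, _, haα, one_mul _⟩, ⟨1, by simp, _, haα, one_mul _⟩,
          ⟨S.c, by simp, 1, h1, mul_one _⟩, ⟨S.c, by simp, 1, h1, mul_one _⟩⟩⟩
    · exact ⟨1, _, S.isWreath_c, forall_alph.2
        ⟨⟨S.b, by simp, S.β, hβ, rfl⟩, ⟨S.b, by simp, S.β, hβ, rfl⟩,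
          ⟨S.b, by simp, 1, h1, mul_one _⟩, ⟨S.b, by simp, 1, h1, mul_one _⟩⟩⟩

theorem generators_subset_contractionMultipliers :
    S.generators ⊆ (contractionMultipliers (Nuc S) : Set (Equiv.Perm Word)) := by
  rintro _ (rfl | rfl | rfl | rfl | rfl | rfl)
  exacts [S.α_mem_contractionMultipliers, S.β_mem_contractionMultipliers,
    S.βγ_subset_contractionMultipliers (by simp), S.a_mem_contractionMultipliers,
    S.bc_subset_contractionMultipliers (by simp), S.bc_subset_contractionMultipliers (by simp)]

theorem contractsTo_nuc_of_mem_gam {g : Equiv.Perm Word} (hg : g ∈ Gam S) :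
    ContractsTo (Nuc S) g := by
  have hgen := S.generators_subset_contractionMultipliers
  refine contractsTo_of_mem_closure (S.piece_subset_nuc .A (one_mem _)) hgen (fun s hs => ?_) hg
  rw [← inv_inv s, S.inv_eq_self_of_mem_generators hs]
  exact hgen hs

/-! ### Minimality -/

theorem piece_A_le_selfSections : S.piece .A ≤ selfSections [3, 3] := by
  refine (Subgroup.closure_le _).2 ?_
  rintro _ (rfl | rfl | rfl | rfl) <;> exact mem_selfSections.2 ⟨by simp, fun w => by simp⟩

theorem piece_A₁_le_sectionsAt : S.piece .A₁ ≤ sectionsAt (S.piece .A) [2] := by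
  obtain ⟨hβ, -, hb, hc⟩ := S.generators_mem_piece_A
  refine (Subgroup.closure_le _).2 ?_
  rintro _ (rfl | rfl | rfl) <;> refine mem_sectionsAt.2 ?_
  · exact ⟨S.β, hβ, by simp, fun w => by simp⟩
  · exact ⟨S.c, hc, by simp, fun w => by simp⟩
  · exact ⟨S.b, hb, by simp, fun w => by simp⟩

theorem piece_C_le_sectionsAt : S.piece .C ≤ sectionsAt (S.piece .A) [0] := by
  obtain ⟨hβ, hγ, hb, hc⟩ := S.generators_mem_piece_A
  refine (Subgroup.closure_le _).2 ?_
  rintro _ (rfl | rfl | rfl | rfl) <;> refine mem_sectionsAt.2 ?_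
  · exact ⟨S.β, hβ, by simp, fun w => by simp⟩
  · exact ⟨S.γ, hγ, by simp, fun w => by simp⟩
  · exact ⟨S.b * S.β, mul_mem hb hβ, by simp, fun w => by simp⟩
  · exact ⟨S.c * S.γ, mul_mem hc hγ, by simp, fun w => by simp⟩

theorem piece_C₁_le_sectionsAt : S.piece .C₁ ≤ sectionsAt (S.piece .A) [1] := by
  obtain ⟨hβ, -, hb, hc⟩ := S.generators_mem_piece_A
  refine (Subgroup.closure_le _).2 ?_
  rintro _ (rfl | rfl | rfl) <;> refine mem_sectionsAt.2 ?_
  · exact ⟨S.β, hβ, by simp, fun w => by simp⟩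
  · exact ⟨S.b, hb, by simp, fun w => by simp⟩
  · exact ⟨S.c, hc, by simp, fun w => by simp⟩

theorem piece_B_le_sectionsAt : S.piece .B ≤ sectionsAt (S.piece .C) [0] := by
  obtain ⟨hα, hβ, ha, hb⟩ := S.generators_mem_piece_C
  refine (Subgroup.closure_le _).2 ?_
  rintro _ (rfl | rfl | rfl | rfl) <;> refine mem_sectionsAt.2 ?_
  · exact ⟨S.β, hβ, by simp, fun w => by simp⟩
  · exact ⟨S.α * S.β * S.α, mul_mem (mul_mem hα hβ) hα, by simp [permSigma],
      fun w => by simp [permSigma]⟩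
  · exact ⟨S.b * S.β, mul_mem hb hβ, by simp, fun w => by simp⟩
  · exact ⟨S.a * S.b * S.a, mul_mem (mul_mem ha hb) ha, by simp [permPi],
      fun w => by simp [permPi]⟩

theorem piece_B₁_le_sectionsAt : S.piece .B₁ ≤ sectionsAt (S.piece .C₁) [0] := by
  obtain ⟨hγ, haα, hbβ⟩ := S.generators_mem_piece_C₁
  refine (Subgroup.closure_le _).2 ?_
  rintro _ (rfl | rfl | rfl) <;> refine mem_sectionsAt.2 ?_
  · exact ⟨S.γ, hγ, by simp, fun w => by simp⟩
  · exact ⟨S.b * S.β, hbβ, by simp, fun w => by simp⟩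
  · exact ⟨S.a * S.α * (S.b * S.β) * (S.a * S.α), mul_mem (mul_mem haα hbβ) haα,
      by simp [permSigma, permPi], fun w => by simp [permSigma, permPi]⟩

theorem piece_A_le_gam : S.piece .A ≤ Gam S := by
  refine Subgroup.closure_mono ?_
  rintro _ (rfl | rfl | rfl | rfl) <;> simp

theorem isRecurrent_of_mem_nuc {g : Equiv.Perm Word} (hg : g ∈ Nuc S) :
    IsRecurrent (Gam S) g := by
  have hA : ∀ f ∈ S.piece .A, IsRecurrent (Gam S) f := fun f hf =>
    isRecurrent_of_mem_selfSections (List.cons_ne_nil _ _) (S.piece_A_le_gam hf)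
      (S.piece_A_le_selfSections hf)
  have hC := isRecurrent_of_le_sectionsAt hA S.piece_C_le_sectionsAt
  have hC₁ := isRecurrent_of_le_sectionsAt hA S.piece_C₁_le_sectionsAt
  obtain ⟨i, hi⟩ := S.mem_nuc.1 hg
  cases i
  case A => exact hA g hi
  case B => exact isRecurrent_of_le_sectionsAt hC S.piece_B_le_sectionsAt g hi
  case C => exact hC g hi
  case A₁ => exact isRecurrent_of_le_sectionsAt hA S.piece_A₁_le_sectionsAt g hi
  case B₁ => exact isRecurrent_of_le_sectionsAt hC₁ S.piece_B₁_le_sectionsAt g hi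
  case C₁ => exact hC₁ g hi

end NekSystem

/-- Γ is contracting with nucleus N: (i) N is state-closed; (ii) for every g ∈ Γ
all sections at sufficiently long words lie in N; (iii) N is the smallest subset
of Γ with property (ii). -/
theorem statement5 (S : NekSystem) :
    (∀ g ∈ Nuc S, ∀ x : Alph, ∃ h ∈ Nuc S, IsSection g [x] h) ∧
    (∀ g ∈ Gam S, ∃ n₀ : ℕ, ∀ v : Word, n₀ ≤ v.length → ∃ h ∈ Nuc S, IsSection g v h) ∧
    (∀ N' : Set (Equiv.Perm Word), N' ⊆ ↑(Gam S) →
      (∀ g ∈ Gam S, ∃ n₀ : ℕ, ∀ v : Word, n₀ ≤ v.length → ∃ h ∈ N', IsSection g v h) →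
      Nuc S ⊆ N') := by
  refine ⟨fun g hg x => S.isStateClosed_nuc.exists_isSection hg [x],
    fun g hg => (S.contractsTo_nuc_of_mem_gam hg).exists_depth S.isStateClosed_nuc,
    fun N' _ hN' g hg => (S.isRecurrent_of_mem_nuc hg).mem_of_exists_depth hN'⟩
end

section
/- The norms of products of the matrices I₁, I₂, I₃, I₄ tend to zero uniformly in the length of the product: for every ε > 0 there exists n₀ such that for every n ≥ n₀ and every sequence (x₁, x₂, …, x_n) ∈ {1,2,3,4}^n, the operator norm of the product I_{x₁}·I_{x₂}⋯I_{x_n} is less than ε. -/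
/-!
The diagonal quadratic form `q v = 144 (v₀² + v₁²) + 3 v₂² + 3 v₃² + 4 v₄²` is a common Lyapunov
function: each of the four matrices contracts it by the factor `3/4`. All four are block lower
triangular. The upper left `2 × 2` blocks are `1/√2` times orthogonal matrices, the lower right
`3 × 3` blocks contract the part of `q` in `v₂, v₃, v₄`, and the large weight `144` absorbs the
off-diagonal entries. Since `3 ‖v‖² ≤ q v ≤ 144 ‖v‖²`, a product of length `n` has operator norm
at most `√(48 (3/4)ⁿ)`.
-/

/-- The matrix I₁. -/
noncomputable def I1 : Matrix (Fin 5) (Fin 5) ℝ :=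
  !![-1/2, -1/2, 0, 0, 0;
     1/2, -1/2, 0, 0, 0;
     0, 0, 0, 1/2, 0;
     0, 0, 0, 0, 1;
     0, 0, 1/2, 0, 0]

/-- The matrix I₂. -/
noncomputable def I2 : Matrix (Fin 5) (Fin 5) ℝ :=
  !![-1/2, -1/2, 0, 0, 0;
     1/2, -1/2, 0, 0, 0;
     0, 0, 0, 0, 0;
     0, 0, 0, 0, 0;
     1, 0, -1/2, 1/2, 0]

/-- The matrix I₃. -/
noncomputable def I3 : Matrix (Fin 5) (Fin 5) ℝ :=
  !![1/2, -1/2, 0, 0, 0;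
     -1/2, -1/2, 0, 0, 0;
     1, 0, -1/2, 1/2, 0;
     0, 0, 0, 0, 0;
     0, 0, 0, 0, 0]

/-- The matrix I₄. -/
noncomputable def I4 : Matrix (Fin 5) (Fin 5) ℝ :=
  !![1/2, -1/2, 0, 0, 0;
     -1/2, -1/2, 0, 0, 0;
     0, 0, 1/2, 0, 0;
     0, 0, 0, 0, 1;
     0, 0, 0, 1/2, 0]

/-- The family I₁, I₂, I₃, I₄ indexed by {1,2,3,4}. -/
noncomputable def Imat : Fin 4 → Matrix (Fin 5) (Fin 5) ℝ := ![I1, I2, I3, I4]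

/-- The operator norm of a matrix acting on Euclidean ℝ⁵. -/
noncomputable def opNorm (M : Matrix (Fin 5) (Fin 5) ℝ) : ℝ :=
  ‖LinearMap.toContinuousLinearMap (Matrix.toEuclideanLin M)‖

lemma apply_list_prod_smul_le {M α R : Type*} [Monoid M] [MulAction M α] [MonoidWithZero R]
    [Preorder R] [PosMulMono R] {f : α → R} {c : R} (hc : 0 ≤ c) {l : List M}
    (hf : ∀ m ∈ l, ∀ x, f (m • x) ≤ c * f x) (x : α) :
    f (l.prod • x) ≤ c ^ l.length * f x := by
  induction l with
  | nil => simp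
  | cons m l ih =>
    obtain ⟨hm, hl⟩ := List.forall_mem_cons.1 hf
    calc f ((m :: l).prod • x) = f (m • l.prod • x) := by rw [List.prod_cons, mul_smul]
      _ ≤ c * f (l.prod • x) := hm _
      _ ≤ c * (c ^ l.length * f x) := mul_le_mul_of_nonneg_left (ih hl) hc
      _ = c ^ (m :: l).length * f x := by rw [List.length_cons, pow_succ', mul_assoc]

lemma norm_list_prod_le_sqrt {𝕜 E : Type*} [NontriviallyNormedField 𝕜] [SeminormedAddCommGroup E]
    [NormedSpace 𝕜 E] {q : E → ℝ} {a b c : ℝ} (ha : 0 < a) (hc : 0 ≤ c)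
    (hlower : ∀ v, a * ‖v‖ ^ 2 ≤ q v) (hupper : ∀ v, q v ≤ b * ‖v‖ ^ 2) {l : List (E →L[𝕜] E)}
    (hl : ∀ T ∈ l, ∀ v, q (T v) ≤ c * q v) :
    ‖l.prod‖ ≤ √(b / a * c ^ l.length) := by
  refine ContinuousLinearMap.opNorm_le_bound _ (Real.sqrt_nonneg _) fun v => ?_
  have hscaled : a * ‖l.prod v‖ ^ 2 ≤ c ^ l.length * (b * ‖v‖ ^ 2) :=
    calc a * ‖l.prod v‖ ^ 2 ≤ q (l.prod v) := hlower _
      _ ≤ c ^ l.length * q v := apply_list_prod_smul_le hc hl v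
      _ ≤ c ^ l.length * (b * ‖v‖ ^ 2) := by gcongr; exact hupper v
  have hsq : ‖l.prod v‖ ^ 2 ≤ b / a * c ^ l.length * ‖v‖ ^ 2 :=
    calc ‖l.prod v‖ ^ 2 ≤ c ^ l.length * (b * ‖v‖ ^ 2) / a := (le_div_iff₀' ha).2 hscaled
      _ = b / a * c ^ l.length * ‖v‖ ^ 2 := by ring
  calc ‖l.prod v‖ ≤ √(b / a * c ^ l.length * ‖v‖ ^ 2) := Real.le_sqrt_of_sq_le hsq
    _ = √(b / a * c ^ l.length) * ‖v‖ := by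
      rw [Real.sqrt_mul' _ (sq_nonneg _), Real.sqrt_sq (norm_nonneg v)]

section Lyapunov

open Matrix
open QuadraticMap (weightedSumSquares weightedSumSquares_apply)

variable {ι : Type*} [Fintype ι] {w : ι → ℝ}

lemma mul_norm_sq_le_weightedSumSquares {a : ℝ} (ha : ∀ i, a ≤ w i) (v : EuclideanSpace ℝ ι) :
    a * ‖v‖ ^ 2 ≤ weightedSumSquares ℝ w v.ofLp := by
  simp only [weightedSumSquares_apply, EuclideanSpace.real_norm_sq_eq, Finset.mul_sum, smul_eq_mul,
    ← sq]
  gcongr with i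
  exact ha i

lemma weightedSumSquares_le_mul_norm_sq {b : ℝ} (hb : ∀ i, w i ≤ b) (v : EuclideanSpace ℝ ι) :
    weightedSumSquares ℝ w v.ofLp ≤ b * ‖v‖ ^ 2 := by
  simp only [weightedSumSquares_apply, EuclideanSpace.real_norm_sq_eq, Finset.mul_sum, smul_eq_mul,
    ← sq]
  gcongr with i
  exact hb i

/-- The weights of a diagonal quadratic form that is a common Lyapunov function for `I1`, `I2`,
`I3`, `I4`. The ratio `3 : 4` of the last two makes up for the entry `1` by which `I1` and `I4` move
coordinate `4` into coordinate `3` without shrinking it. -/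
def lyapunovWeight : Fin 5 → ℝ := ![144, 144, 3, 3, 4]

lemma weightedSumSquares_lyapunovWeight (v : Fin 5 → ℝ) :
    weightedSumSquares ℝ lyapunovWeight v =
      144 * (v 0 ^ 2 + v 1 ^ 2) + 3 * v 2 ^ 2 + 3 * v 3 ^ 2 + 4 * v 4 ^ 2 := by
  simp only [weightedSumSquares_apply, Fin.sum_univ_five, lyapunovWeight, cons_val, smul_eq_mul]
  ring

lemma three_le_lyapunovWeight (i : Fin 5) : 3 ≤ lyapunovWeight i := by
  fin_cases i <;> norm_num [lyapunovWeight]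

lemma lyapunovWeight_le (i : Fin 5) : lyapunovWeight i ≤ 144 := by
  fin_cases i <;> norm_num [lyapunovWeight]

lemma I1_mulVec (v : Fin 5 → ℝ) :
    I1 *ᵥ v = ![-(v 0 + v 1) / 2, (v 0 - v 1) / 2, v 3 / 2, v 4, v 2 / 2] := by
  ext i
  fin_cases i <;>
    simp only [I1, mulVec, dotProduct, Fin.sum_univ_five, of_apply, Fin.zero_eta, Fin.mk_one,
      Fin.reduceFinMk, cons_val] <;>
    ring

lemma I2_mulVec (v : Fin 5 → ℝ) :
    I2 *ᵥ v = ![-(v 0 + v 1) / 2, (v 0 - v 1) / 2, 0, 0, v 0 + (v 3 - v 2) / 2] := by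
  ext i
  fin_cases i <;>
    simp only [I2, mulVec, dotProduct, Fin.sum_univ_five, of_apply, Fin.zero_eta, Fin.mk_one,
      Fin.reduceFinMk, cons_val] <;>
    ring

lemma I3_mulVec (v : Fin 5 → ℝ) :
    I3 *ᵥ v = ![(v 0 - v 1) / 2, -(v 0 + v 1) / 2, v 0 + (v 3 - v 2) / 2, 0, 0] := by
  ext i
  fin_cases i <;>
    simp only [I3, mulVec, dotProduct, Fin.sum_univ_five, of_apply, Fin.zero_eta, Fin.mk_one,
      Fin.reduceFinMk, cons_val] <;>
    ring

lemma I4_mulVec (v : Fin 5 → ℝ) :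
    I4 *ᵥ v = ![(v 0 - v 1) / 2, -(v 0 + v 1) / 2, v 2 / 2, v 4, v 3 / 2] := by
  ext i
  fin_cases i <;>
    simp only [I4, mulVec, dotProduct, Fin.sum_univ_five, of_apply, Fin.zero_eta, Fin.mk_one,
      Fin.reduceFinMk, cons_val] <;>
    ring

-- The constants fit `lyapunovWeight`: `4 * 9/16 = 3/4 * 3` and `144/2 + 4 * 9 = 3/4 * 144`.
lemma add_sub_div_two_sq_le (x y z : ℝ) :
    (x + (z - y) / 2) ^ 2 ≤ 9 * x ^ 2 + 9 / 16 * (y ^ 2 + z ^ 2) := by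
  have hyoung : (x + (z - y) / 2) ^ 2 ≤ 9 * x ^ 2 + 9 / 8 * ((z - y) / 2) ^ 2 := by
    linarith [sq_nonneg (8 * x - (z - y) / 2)]
  linarith [sq_nonneg (y + z)]

lemma weightedSumSquares_Imat_mulVec_le (i : Fin 4) (v : Fin 5 → ℝ) :
    weightedSumSquares ℝ lyapunovWeight (Imat i *ᵥ v) ≤
      3 / 4 * weightedSumSquares ℝ lyapunovWeight v := by
  have hcoupling := add_sub_div_two_sq_le (v 0) (v 2) (v 3)
  rw [weightedSumSquares_lyapunovWeight, weightedSumSquares_lyapunovWeight]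
  fin_cases i <;>
    simp only [Imat, Fin.zero_eta, Fin.mk_one, Fin.reduceFinMk, cons_val, I1_mulVec, I2_mulVec,
      I3_mulVec, I4_mulVec] <;>
    linarith [sq_nonneg (v 0), sq_nonneg (v 1), sq_nonneg (v 2), sq_nonneg (v 3), sq_nonneg (v 4)]

lemma opNorm_list_prod_Imat_le (l : List (Fin 4)) :
    opNorm (l.map Imat).prod ≤ √(48 * (3 / 4) ^ l.length) := by
  have hcontract : ∀ T ∈ l.map fun i => toEuclideanCLM (𝕜 := ℝ) (Imat i), ∀ v,
      weightedSumSquares ℝ lyapunovWeight (T v).ofLp ≤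
        3 / 4 * weightedSumSquares ℝ lyapunovWeight v.ofLp :=
    List.forall_mem_map.2 fun i _ v => weightedSumSquares_Imat_mulVec_le i v.ofLp
  have hbound := norm_list_prod_le_sqrt (by norm_num) (by norm_num)
    (mul_norm_sq_le_weightedSumSquares three_le_lyapunovWeight)
    (weightedSumSquares_le_mul_norm_sq lyapunovWeight_le) hcontract
  calc opNorm (l.map Imat).prod = ‖toEuclideanCLM (𝕜 := ℝ) (l.map Imat).prod‖ := rfl
    _ = ‖(l.map fun i => toEuclideanCLM (𝕜 := ℝ) (Imat i)).prod‖ := by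
      rw [map_list_prod, List.map_map, Function.comp_def]
    _ ≤ √(144 / 3 * (3 / 4) ^ l.length) := by simpa only [List.length_map] using hbound
    _ = √(48 * (3 / 4) ^ l.length) := by norm_num

end Lyapunov

/-- The operator norms of products I_{x₁}·I_{x₂}⋯I_{x_n} tend to zero uniformly
in the length of the product. -/
theorem statement8 : ∀ ε : ℝ, 0 < ε → ∃ n₀ : ℕ, ∀ n : ℕ, n₀ ≤ n →
    ∀ x : Fin n → Fin 4, opNorm ((List.ofFn fun k => Imat (x k)).prod) < ε := by
  intro ε hε
  obtain ⟨n₀, hn₀⟩ := exists_pow_lt_of_lt_one (show 0 < ε ^ 2 / 48 by positivity)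
    (show (3 / 4 : ℝ) < 1 by norm_num)
  refine ⟨n₀, fun n hn x => ?_⟩
  have hpow : (3 / 4 : ℝ) ^ n ≤ (3 / 4) ^ n₀ :=
    pow_le_pow_of_le_one (by norm_num) (by norm_num) hn
  calc opNorm (List.ofFn fun k => Imat (x k)).prod
      ≤ √(48 * (3 / 4) ^ n) := by
        simpa only [List.map_ofFn, List.length_ofFn, Function.comp_def] using
          opNorm_list_prod_Imat_le (List.ofFn x)
    _ < ε := (Real.sqrt_lt' hε).2 (by linarith)
end

section
/- For all real numbers x, y, z ≥ 0, the sum of the three coordinates of F₁(F₁(x,y,z)) is at most (x+y+z)/2. (Equivalently: two applications of the folding transformation F₁ reduce the mass of a tripod at least by half, so the normalized second iterate is uniformly expanding by a factor of at least 2.) -/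
/-- The folding transformation F₁(x, y, z) = (|x − z|/2, min(x, z), y). -/
noncomputable def F1 : ℝ × ℝ × ℝ → ℝ × ℝ × ℝ :=
  fun p => (|p.1 - p.2.2| / 2, min p.1 p.2.2, p.2.1)

/-!
One application of `F₁` lowers the mass by exactly half the sum of the first and third
coordinates, because `|x - z| / 2 + min x z = (x + z) / 2`. After the first application these
coordinates are `|x - z| / 2` and `y`, so the second one leaves the mass
`(x + y + z) / 2 - |x - z| / 4`.
-/

theorem half_abs_sub_add_min {K : Type*} [Field K] [LinearOrder K] [IsStrictOrderedRing K]
    (a b : K) : |a - b| / 2 + min a b = (a + b) / 2 := by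
  linarith [max_sub_min_eq_abs' a b, min_add_max a b]

/-- The mass of a tripod with leg lengths `p`, i.e. the sum of its three coordinates. -/
def tripodMass (p : ℝ × ℝ × ℝ) : ℝ :=
  p.1 + p.2.1 + p.2.2

theorem tripodMass_F1 (p : ℝ × ℝ × ℝ) :
    tripodMass (F1 p) = tripodMass p - (p.1 + p.2.2) / 2 := by
  simp only [tripodMass, F1, half_abs_sub_add_min]
  ring

theorem tripodMass_F1_F1 (p : ℝ × ℝ × ℝ) :
    tripodMass (F1 (F1 p)) = tripodMass p / 2 - |p.1 - p.2.2| / 4 := by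
  calc
    tripodMass (F1 (F1 p)) =
        tripodMass p - (p.1 + p.2.2) / 2 - (|p.1 - p.2.2| / 2 + p.2.1) / 2 := by
      rw [tripodMass_F1, tripodMass_F1, F1]
    _ = tripodMass p / 2 - |p.1 - p.2.2| / 4 := by
      rw [tripodMass]
      ring

theorem statement9_general (p : ℝ × ℝ × ℝ) : tripodMass (F1 (F1 p)) ≤ tripodMass p / 2 := by
  rw [tripodMass_F1_F1]
  exact sub_le_self _ (by positivity)

/-- Two applications of F₁ reduce the mass (sum of the coordinates) at least
by half. -/
theorem statement9 (x y z : ℝ) (hx : 0 ≤ x) (hy : 0 ≤ y) (hz : 0 ≤ z) :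
    (F1 (F1 (x, y, z))).1 + (F1 (F1 (x, y, z))).2.1 + (F1 (F1 (x, y, z))).2.2 ≤
      (x + y + z) / 2 :=
  statement9_general (x, y, z)
end

section
/- For every point (x,y,z) of the simplex Δ and for i = 1, 2: the point Φ̃_i(x,y,z) belongs to Δ, and F̃(Φ̃_i(x,y,z)) = (x,y,z). (Thus Φ̃₁ and Φ̃₂ are branches of the inverse of F̃ : Δ → Δ.) -/
/-!
Swapping the outer coordinates of a point preserves `Ftil` and exchanges the two branches, so it
suffices to treat `Phi1`. On the half `x ≤ z` of the simplex, `Ftil` has neither absolute value nor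
minimum: it is `((z - x) / (1 + y), 2 * x / (1 + y), 2 * y / (1 + y))`. The image of `Phi1` lies in
this half, and with `s = 1 + x + y` the relation `x + y + z = 1` turns the denominator `1 + z / s`
of `Ftil` at `Phi1 (x, y, z) = (y / s, z / s, (2 * x + y) / s)` into `2 / s`, so `s` cancels.
-/

/-- The simplex Δ = {(x,y,z) : x,y,z ≥ 0, x+y+z = 1}. -/
def Delta : Set (ℝ × ℝ × ℝ) :=
  {p | 0 ≤ p.1 ∧ 0 ≤ p.2.1 ∧ 0 ≤ p.2.2 ∧ p.1 + p.2.1 + p.2.2 = 1}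

/-- F̃(x,y,z) = (|x−z|/(1+y), 2·min(x,z)/(1+y), 2y/(1+y)). -/
noncomputable def Ftil : ℝ × ℝ × ℝ → ℝ × ℝ × ℝ :=
  fun p => (|p.1 - p.2.2| / (1 + p.2.1), 2 * min p.1 p.2.2 / (1 + p.2.1),
    2 * p.2.1 / (1 + p.2.1))

/-- Φ̃₁(x,y,z) = (y/(1+x+y), z/(1+x+y), (2x+y)/(1+x+y)). -/
noncomputable def Phi1 : ℝ × ℝ × ℝ → ℝ × ℝ × ℝ :=
  fun p => (p.2.1 / (1 + p.1 + p.2.1), p.2.2 / (1 + p.1 + p.2.1),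
    (2 * p.1 + p.2.1) / (1 + p.1 + p.2.1))

/-- Φ̃₂(x,y,z) = ((2x+y)/(1+x+y), z/(1+x+y), y/(1+x+y)). -/
noncomputable def Phi2 : ℝ × ℝ × ℝ → ℝ × ℝ × ℝ :=
  fun p => ((2 * p.1 + p.2.1) / (1 + p.1 + p.2.1), p.2.2 / (1 + p.1 + p.2.1),
    p.2.1 / (1 + p.1 + p.2.1))

/-- The reflection of `ℝ × ℝ × ℝ` exchanging the outer coordinates `x` and `z`; it relates the two
branches `Phi1` and `Phi2`. -/
def swapOuter (p : ℝ × ℝ × ℝ) : ℝ × ℝ × ℝ :=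
  (p.2.2, p.2.1, p.1)

theorem swapOuter_Phi1 (p : ℝ × ℝ × ℝ) : swapOuter (Phi1 p) = Phi2 p :=
  rfl

theorem Ftil_swapOuter (p : ℝ × ℝ × ℝ) : Ftil (swapOuter p) = Ftil p := by
  simp only [Ftil, swapOuter, abs_sub_comm p.2.2, min_comm p.2.2]

theorem swapOuter_mem_Delta {p : ℝ × ℝ × ℝ} (hp : p ∈ Delta) : swapOuter p ∈ Delta := by
  obtain ⟨hx, hy, hz, hsum⟩ := hp
  exact ⟨hz, hy, hx, by dsimp only [swapOuter]; linarith⟩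

theorem Ftil_of_fst_le_snd_snd {p : ℝ × ℝ × ℝ} (h : p.1 ≤ p.2.2) :
    Ftil p = ((p.2.2 - p.1) / (1 + p.2.1), 2 * p.1 / (1 + p.2.1), 2 * p.2.1 / (1 + p.2.1)) := by
  rw [Ftil, abs_sub_comm, abs_of_nonneg (sub_nonneg.mpr h), min_eq_left h]

theorem one_add_fst_add_snd_pos_of_mem_Delta {p : ℝ × ℝ × ℝ} (hp : p ∈ Delta) :
    0 < 1 + p.1 + p.2.1 := by
  obtain ⟨hx, hy, -, -⟩ := hp
  positivity

theorem Phi1_mem_Delta {p : ℝ × ℝ × ℝ} (hp : p ∈ Delta) : Phi1 p ∈ Delta := by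
  have hs := one_add_fst_add_snd_pos_of_mem_Delta hp
  obtain ⟨hx, hy, hz, hsum⟩ := hp
  refine ⟨by dsimp only [Phi1]; positivity, by dsimp only [Phi1]; positivity,
    by dsimp only [Phi1]; positivity, ?_⟩
  simp only [Phi1, ← add_div]
  rw [div_eq_one_iff_eq hs.ne']
  linarith

theorem Phi1_fst_le_snd_snd {p : ℝ × ℝ × ℝ} (hx : 0 ≤ p.1) (hs : 0 ≤ 1 + p.1 + p.2.1) :
    (Phi1 p).1 ≤ (Phi1 p).2.2 :=
  div_le_div_of_nonneg_right (by linarith) hs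

theorem one_add_Phi1_snd_fst {p : ℝ × ℝ × ℝ} (hs : 1 + p.1 + p.2.1 ≠ 0)
    (hsum : p.1 + p.2.1 + p.2.2 = 1) : 1 + (Phi1 p).2.1 = 2 / (1 + p.1 + p.2.1) := by
  rw [Phi1, one_add_div hs]
  congr 1
  linarith

theorem Ftil_Phi1 {p : ℝ × ℝ × ℝ} (hx : 0 ≤ p.1) (hs : 0 < 1 + p.1 + p.2.1)
    (hsum : p.1 + p.2.1 + p.2.2 = 1) : Ftil (Phi1 p) = p := by
  rw [Ftil_of_fst_le_snd_snd (Phi1_fst_le_snd_snd hx hs.le), one_add_Phi1_snd_fst hs.ne' hsum]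
  refine Prod.ext ?_ (Prod.ext ?_ ?_) <;> dsimp only [Phi1]
  · field_simp
    ring
  · field_simp
  · field_simp

/-- Φ̃₁ and Φ̃₂ map Δ into Δ and are branches of the inverse of F̃ : Δ → Δ. -/
theorem statement10 :
    ∀ p ∈ Delta,
      (Phi1 p ∈ Delta ∧ Ftil (Phi1 p) = p) ∧ (Phi2 p ∈ Delta ∧ Ftil (Phi2 p) = p) := by
  intro p hp
  have hmem : Phi1 p ∈ Delta := Phi1_mem_Delta hp
  have hinv : Ftil (Phi1 p) = p :=
    Ftil_Phi1 hp.1 (one_add_fst_add_snd_pos_of_mem_Delta hp) hp.2.2.2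
  refine ⟨⟨hmem, hinv⟩, ?_⟩
  rw [← swapOuter_Phi1, Ftil_swapOuter]
  exact ⟨swapOuter_mem_Delta hmem, hinv⟩
end

section
/- The maps F and F̃, regarded as self-maps of the simplex Δ, are topologically conjugate: there exists a homeomorphism ψ : Δ → Δ such that ψ ∘ F = F̃ ∘ ψ on Δ. -/
/-- F(x,y,z) = (|x−z|, 2·min(x,z), y). -/
noncomputable def Fmap : ℝ × ℝ × ℝ → ℝ × ℝ × ℝ :=
  fun p => (|p.1 - p.2.2|, 2 * min p.1 p.2.2, p.2.1)

/-!
The maps are the members `τ = 2` and `τ = 1` of a family: the central projections to `Δ` of the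
piecewise linear maps `(x, y, z) ↦ (τ |x - z|, 2 τ min x z, 2 y)`. Each member folds `Δ` along
`x = z`, and its two inverse branches are the projections of the linear maps
`(x, y, z) ↦ (2 x + y, τ z, y)` and `(x, y, z) ↦ (y, τ z, 2 x + y)`. A homeomorphism of `Δ`
conjugates two members of the family as soon as it intertwines their inverse branches `gᵢ` and `hᵢ`.

To find `ψ` with `ψ ∘ gᵢ = hᵢ ∘ ψ`, start from `φ = id` and repeatedly replace `φ` by the map `φ'`
with `φ' ∘ gᵢ = hᵢ ∘ φ`. This map is well defined and continuous as long as `φ` sends each edge of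
`Δ` into itself, a property that `φ'` inherits. After `n` steps the value at a point is known up to
its image under a composition of `n` of the maps `hᵢ`; these images shrink uniformly to points, so
the iteration converges, and its limit is unique. By uniqueness, the limits for `(g, h)` and for
`(h, g)` are inverse to each other.

A composition of branches maps `Δ` to a triangle `ABC` whose vertices are the projections of the
columns `u`, `v`, `w` of a matrix. One more branch turns the columns into `(2u, u + w, τv)` or
`(2w, u + w, τv)`: it splits the edge `AC` at a point `M` and keeps `AMB` or `CMB`. The ratio of the
coordinate sums of `u` and `w` stays bounded, so `M` stays away from `A` and `C`, and the triangles
shrink geometrically.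
-/

open Filter Function Set Topology

/-! ### Conjugacies of iterated function systems -/

section IteratedFunctionSystem

variable {ι X Y : Type*} {g : ι → X → X} {h : ι → Y → Y}

/-- `φ'` is the transfer of `φ` from the iterated function system `g` to `h`. The fixed points of
this relation are the maps that semiconjugate each `g i` to `h i`. -/
def IsTransfer (g : ι → X → X) (h : ι → Y → Y) (φ φ' : X → Y) : Prop :=
  ∀ i p, φ' (g i p) = h i (φ p)

/-- The images of the compositions of `n` maps of the iterated function system `h` have diameters
tending to zero. The composition spelled by a list `l` is `l.foldr h`. -/
def IsShrinking [PseudoMetricSpace Y] (h : ι → Y → Y) : Prop :=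
  ∃ d : ℕ → ℝ, Tendsto d atTop (𝓝 0) ∧
    ∀ (l : List ι) (p q : Y), dist (l.foldr h p) (l.foldr h q) ≤ d l.length

theorem exists_foldr_eq (hg : (uncurry g).Surjective) (n : ℕ) (p : X) :
    ∃ l : List ι, l.length = n ∧ ∃ q, l.foldr g q = p := by
  induction n generalizing p with
  | zero => exact ⟨[], rfl, p, rfl⟩
  | succ n ih =>
    obtain ⟨⟨i, q⟩, rfl⟩ := hg p
    obtain ⟨l, rfl, r, rfl⟩ := ih q
    exact ⟨i :: l, rfl, r, rfl⟩

theorem apply_foldr_of_isTransfer {u : ℕ → X → Y} (hu : ∀ n, IsTransfer g h (u n) (u (n + 1)))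
    (l : List ι) (q : X) : u l.length (l.foldr g q) = l.foldr h (u 0 q) := by
  induction l with
  | nil => rfl
  | cons i l ih => exact (hu _ i _).trans (congrArg (h i) ih)

theorem dist_le_of_isTransfer [PseudoMetricSpace Y] (hg : (uncurry g).Surjective) {d : ℕ → ℝ}
    (hd : ∀ (l : List ι) (p q : Y), dist (l.foldr h p) (l.foldr h q) ≤ d l.length)
    {u v : ℕ → X → Y} (hu : ∀ n, IsTransfer g h (u n) (u (n + 1)))
    (hv : ∀ n, IsTransfer g h (v n) (v (n + 1))) (n : ℕ) (p : X) :
    dist (u n p) (v n p) ≤ d n := by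
  obtain ⟨l, rfl, q, rfl⟩ := exists_foldr_eq hg n p
  rw [apply_foldr_of_isTransfer hu, apply_foldr_of_isTransfer hv]
  exact hd l _ _

theorem IsShrinking.semiconj_unique [MetricSpace Y] (hh : IsShrinking h)
    (hg : (uncurry g).Surjective) {φ ψ : X → Y} (hφ : ∀ i, Semiconj φ (g i) (h i))
    (hψ : ∀ i, Semiconj ψ (g i) (h i)) : φ = ψ := by
  obtain ⟨d, hd, hdist⟩ := hh
  have hle : ∀ p n, dist (φ p) (ψ p) ≤ d n := fun p n =>
    dist_le_of_isTransfer hg hdist (u := fun _ => φ) (v := fun _ => ψ) (fun _ => hφ) (fun _ => hψ)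
      n p
  exact funext fun p => dist_le_zero.1 (ge_of_tendsto' hd (hle p))

theorem exists_isTransfer [TopologicalSpace X] [CompactSpace X] [T2Space X] [TopologicalSpace Y]
    [Finite ι] (hg : (uncurry g).Surjective) (hgc : ∀ i, Continuous (g i))
    (hhc : ∀ i, Continuous (h i)) (φ : C(X, Y))
    (hφ : ∀ i j p q, g i p = g j q → h i (φ p) = h j (φ q)) :
    ∃ φ' : C(X, Y), IsTransfer g h φ φ' := by
  let : TopologicalSpace ι := ⊥
  have : DiscreteTopology ι := ⟨rfl⟩
  have hquot : IsQuotientMap (uncurry g) :=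
    IsQuotientMap.of_surjective_continuous hg (continuous_prod_of_discrete_left.2 hgc)
  let Φ : C(ι × X, Y) :=
    ⟨fun x => h x.1 (φ x.2),
      continuous_prod_of_discrete_left.2 fun i => (hhc i).comp φ.continuous⟩
  have hΦ : FactorsThrough Φ (uncurry g) := fun x y => hφ x.1 y.1 x.2 y.2
  refine ⟨IsQuotientMap.lift (f := ⟨uncurry g, hquot.continuous⟩) hquot Φ hΦ, fun i p => ?_⟩
  exact DFunLike.congr_fun
    (IsQuotientMap.lift_comp (f := ⟨uncurry g, hquot.continuous⟩) hquot Φ hΦ) (i, p)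

theorem IsShrinking.exists_semiconj [TopologicalSpace X] [CompactSpace X] [MetricSpace Y]
    [CompleteSpace Y] (hh : IsShrinking h) (hg : (uncurry g).Surjective)
    (hhc : ∀ i, Continuous (h i)) {𝓐 : Set C(X, Y)} (h𝓐 : 𝓐.Nonempty)
    (htransfer : ∀ φ ∈ 𝓐, ∃ φ' ∈ 𝓐, IsTransfer g h φ φ') :
    ∃ ψ : C(X, Y), ∀ i, Semiconj ψ (g i) (h i) := by
  obtain ⟨d, hd, hdist⟩ := hh
  obtain ⟨φ₀, hφ₀⟩ := h𝓐
  choose! T hT𝓐 hT using htransfer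
  have hmem : ∀ n, T^[n] φ₀ ∈ 𝓐 := fun n => (show MapsTo T 𝓐 𝓐 from hT𝓐).iterate n hφ₀
  have hstep : ∀ n, IsTransfer g h (T^[n] φ₀) (T^[n + 1] φ₀) := fun n => by
    rw [iterate_succ_apply']
    exact hT _ (hmem n)
  rcases isEmpty_or_nonempty X with hX | hX
  · exact ⟨φ₀, fun _ p => hX.elim p⟩
  have hcauchy : CauchySeq fun n => T^[n] φ₀ := by
    refine cauchySeq_of_le_tendsto_0' d (fun n m hnm => ?_) hd
    obtain ⟨k, rfl⟩ := Nat.exists_eq_add_of_le hnm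
    refine ContinuousMap.dist_le_iff_of_nonempty.2 fun p => ?_
    exact dist_le_of_isTransfer hg hdist (u := fun n => T^[n] φ₀) (v := fun n => T^[n + k] φ₀)
      hstep (fun n => by simpa only [Nat.add_right_comm] using hstep (n + k)) n p
  obtain ⟨ψ, hψ⟩ := cauchySeq_tendsto_of_complete hcauchy
  have heval : ∀ p, Tendsto (fun n => T^[n] φ₀ p) atTop (𝓝 (ψ p)) := fun p =>
    ((continuous_eval_const p).tendsto ψ).comp hψ
  refine ⟨ψ, fun i p => ?_⟩
  refine tendsto_nhds_unique ((heval (g i p)).comp (tendsto_add_atTop_nat 1)) ?_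
  exact (((hhc i).tendsto _).comp (heval p)).congr fun n => (hstep n i p).symm

theorem exists_homeomorph_of_semiconj [MetricSpace X] [MetricSpace Y]
    (hg : (uncurry g).Surjective) (hgs : IsShrinking g) (hh : (uncurry h).Surjective)
    (hhs : IsShrinking h) (ψ : C(X, Y)) (hψ : ∀ i, Semiconj ψ (g i) (h i)) (χ : C(Y, X))
    (hχ : ∀ i, Semiconj χ (h i) (g i)) : ∃ e : X ≃ₜ Y, ⇑e = ψ := by
  have hleft : χ ∘ ψ = id :=
    hgs.semiconj_unique hg (fun i => (hχ i).comp_left (hψ i)) fun _ => Semiconj.id_left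
  have hright : ψ ∘ χ = id :=
    hhs.semiconj_unique hh (fun i => (hψ i).comp_left (hχ i)) fun _ => Semiconj.id_left
  exact ⟨⟨⟨ψ, χ, congrFun hleft, congrFun hright⟩, ψ.continuous, χ.continuous⟩, rfl⟩

end IteratedFunctionSystem

/-! ### Central projections -/

section CentralProjection

variable {E : Type*} [AddCommGroup E] [Module ℝ E]

/-- The central projection of `v` from the origin to the affine hyperplane `ℓ = 1`. It is `0` when
`ℓ v = 0`. -/
noncomputable def centralProj (ℓ : E →ₗ[ℝ] ℝ) (v : E) : E :=
  (ℓ v)⁻¹ • v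

variable {ℓ : E →ₗ[ℝ] ℝ} {u v w : E}

theorem centralProj_of_eq_one (hv : ℓ v = 1) : centralProj ℓ v = v := by
  rw [centralProj, hv, inv_one, one_smul]

theorem centralProj_smul {c : ℝ} (hc : c ≠ 0) (v : E) :
    centralProj ℓ (c • v) = centralProj ℓ v := by
  rw [centralProj, centralProj, map_smul, smul_eq_mul, smul_smul, mul_inv_rev,
    inv_mul_cancel_right₀ hc]

theorem map_centralProj (hv : ℓ v ≠ 0) : ℓ (centralProj ℓ v) = 1 := by
  rw [centralProj, map_smul, smul_eq_mul, inv_mul_cancel₀ hv]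

theorem centralProj_map_centralProj {E' : Type*} [AddCommGroup E'] [Module ℝ E'] (ℓ' : E' →ₗ[ℝ] ℝ)
    (T : E →ₗ[ℝ] E') (hv : ℓ v ≠ 0) :
    centralProj ℓ' (T (centralProj ℓ v)) = centralProj ℓ' (T v) := by
  rw [centralProj.eq_1 ℓ, map_smul, centralProj_smul (inv_ne_zero hv)]

theorem centralProj_add (hu : 0 < ℓ u) (hw : 0 < ℓ w) :
    centralProj ℓ (u + w) =
      AffineMap.lineMap (centralProj ℓ u) (centralProj ℓ w) (ℓ w / (ℓ u + ℓ w)) := by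
  have hsum : ℓ u + ℓ w ≠ 0 := (add_pos hu hw).ne'
  have hcoeff : 1 - ℓ w / (ℓ u + ℓ w) = ℓ u / (ℓ u + ℓ w) := by field_simp; ring
  rw [AffineMap.lineMap_apply_module, hcoeff]
  simp only [centralProj, map_add, smul_smul, div_mul_eq_mul_div, mul_inv_cancel₀ hu.ne',
    mul_inv_cancel₀ hw.ne', one_div, smul_add]

theorem convex_setOf_centralProj_mem (ℓ : E →ₗ[ℝ] ℝ) {s : Set E} (hs : Convex ℝ s) :
    Convex ℝ {v | 0 < ℓ v ∧ centralProj ℓ v ∈ s} := by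
  refine convex_iff_forall_pos.2 fun u hu w hw a b ha hb _ => ?_
  have hau : 0 < ℓ (a • u) := by simpa using mul_pos ha hu.1
  have hbw : 0 < ℓ (b • w) := by simpa using mul_pos hb hw.1
  refine ⟨by simpa only [map_add] using add_pos hau hbw, ?_⟩
  rw [centralProj_add hau hbw, centralProj_smul ha.ne', centralProj_smul hb.ne']
  refine hs.lineMap_mem hu.2 hw.2 ⟨by positivity, ?_⟩
  exact (div_le_one (by positivity)).2 (by linarith)

end CentralProjection

section OfColumns

variable {E : Type*} [AddCommGroup E] [Module ℝ E]

/-- The linear map given by the matrix with columns `u`, `v`, `w`. -/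
def ofColumns (u v w : E) : ℝ × ℝ × ℝ →ₗ[ℝ] E where
  toFun p := p.1 • u + p.2.1 • v + p.2.2 • w
  map_add' p q := by simp only [Prod.fst_add, Prod.snd_add]; module
  map_smul' c p := by
    simp only [Prod.smul_fst, Prod.smul_snd, smul_eq_mul, RingHom.id_apply]
    module

theorem ofColumns_apply (u v w : E) (p : ℝ × ℝ × ℝ) :
    ofColumns u v w p = p.1 • u + p.2.1 • v + p.2.2 • w :=
  rfl

theorem ofColumns_mem {s : Set E} (hs : Convex ℝ s) {u v w : E} (hu : u ∈ s) (hv : v ∈ s)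
    (hw : w ∈ s) {p : ℝ × ℝ × ℝ} (hp : p ∈ Delta) : ofColumns u v w p ∈ s := by
  obtain ⟨hx, hy, hz, hsum⟩ := hp
  have := hs.sum_mem (t := Finset.univ) (w := ![p.1, p.2.1, p.2.2]) (z := ![u, v, w])
    (by simp [Fin.forall_fin_succ, hx, hy, hz]) (by simpa [Fin.sum_univ_three] using hsum)
    (by simp [Fin.forall_fin_succ, hu, hv, hw])
  simpa [Fin.sum_univ_three, ofColumns_apply] using this

end OfColumns

/-! ### Shrinking of the subdivision triangles -/

/-- Edge lengths of a triangle `A B C` whose edge `A C` is the next one to be split. The factors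
are chosen so that a split at ratio between `4 ε` and `1 / 2` decreases `r` to `(1 - ε) r`. -/
structure HasEdgeBounds {E : Type*} [Dist E] (ε r : ℝ) (A B C : E) : Prop where
  dist_left_right : dist A C ≤ r
  dist_left_mid : dist A B ≤ (1 - 3 * ε) * r
  dist_mid_right : dist B C ≤ (1 - ε) * r

namespace HasEdgeBounds

theorem nonneg {E : Type*} [PseudoMetricSpace E] {ε r : ℝ} {A B C : E}
    (h : HasEdgeBounds ε r A B C) : 0 ≤ r :=
  dist_nonneg.trans h.dist_left_right

variable {E : Type*} [SeminormedAddCommGroup E] [NormedSpace ℝ E] {A B C : E} {ε r t : ℝ}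

theorem dist_lineMap_mid_le (h : HasEdgeBounds ε r A B C) (hε : 0 ≤ ε) (ht₀ : 0 ≤ t)
    (ht : t ≤ 1 / 2) : dist (AffineMap.lineMap A C t) B ≤ (1 - ε) * ((1 - ε) * r) := by
  have hr := h.nonneg
  calc dist (AffineMap.lineMap A C t) B
      ≤ (1 - t) * dist A B + t * dist C B := by
        rw [AffineMap.lineMap_apply_module]
        exact (convexOn_univ_dist B).2 (mem_univ A) (mem_univ C) (by linarith) ht₀ (by ring)
    _ ≤ (1 - t) * ((1 - 3 * ε) * r) + t * ((1 - ε) * r) := by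
        rw [dist_comm C B]
        gcongr
        · linarith
        · exact h.dist_left_mid
        · exact h.dist_mid_right
    _ ≤ (1 - ε) * ((1 - ε) * r) := by
        nlinarith [mul_nonneg (mul_nonneg hε hr) (sub_nonneg.2 ht), mul_nonneg (sq_nonneg ε) hr]

theorem split_left (h : HasEdgeBounds ε r A B C) (hε : 0 ≤ ε) (ht₀ : 4 * ε ≤ t) (ht : t ≤ 1 / 2) :
    HasEdgeBounds ε ((1 - ε) * r) A (AffineMap.lineMap A C t) B where
  dist_left_right := by
    have := mul_nonneg hε h.nonneg
    linarith [h.dist_left_mid]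
  dist_left_mid := by
    have hr := h.nonneg
    rw [dist_left_lineMap, Real.norm_of_nonneg (by linarith)]
    calc t * dist A C ≤ (1 - 4 * ε) * r := by
          gcongr
          · linarith
          · linarith
          · exact h.dist_left_right
      _ ≤ (1 - 3 * ε) * ((1 - ε) * r) := by nlinarith [mul_nonneg (sq_nonneg ε) hr]
  dist_mid_right := h.dist_lineMap_mid_le hε (by linarith) ht

theorem split_right (h : HasEdgeBounds ε r A B C) (hε : 0 ≤ ε) (ht₀ : 4 * ε ≤ t) (ht : t ≤ 1 / 2) :
    HasEdgeBounds ε ((1 - ε) * r) C (AffineMap.lineMap A C t) B where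
  dist_left_right := dist_comm B C ▸ h.dist_mid_right
  dist_left_mid := by
    have hr := h.nonneg
    rw [dist_comm, dist_lineMap_right, Real.norm_of_nonneg (by linarith)]
    calc (1 - t) * dist A C ≤ (1 - 4 * ε) * r := by
          gcongr
          · linarith
          · exact h.dist_left_right
      _ ≤ (1 - 3 * ε) * ((1 - ε) * r) := by nlinarith [mul_nonneg (sq_nonneg ε) hr]
  dist_mid_right := h.dist_lineMap_mid_le hε (by linarith) ht

end HasEdgeBounds

/-- A cone of weights `(a, b, c)` which is invariant under `(a, b, c) ↦ (2a, a + c, τb)` and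
`(a, b, c) ↦ (2c, a + c, τb)`, and on which `c / (a + c)` lies between `τ / 4` and `1 / 2`. -/
structure InWeightCone (τ a b c : ℝ) : Prop where
  right_pos : 0 < c
  right_le_left : c ≤ a
  mul_mid_le : τ * b ≤ 2 * c
  left_add_right_le : a + c ≤ 2 * b

namespace InWeightCone

variable {τ a b c : ℝ}

theorem left_pos (h : InWeightCone τ a b c) : 0 < a :=
  h.right_pos.trans_le h.right_le_left

theorem mid_pos (h : InWeightCone τ a b c) : 0 < b := by
  linarith [h.left_pos, h.right_pos, h.left_add_right_le]

theorem split_left (h : InWeightCone τ a b c) (hτ : 0 < τ) :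
    InWeightCone τ (2 * a) (a + c) (τ * b) where
  right_pos := mul_pos hτ h.mid_pos
  right_le_left := by linarith [h.mul_mid_le, h.right_le_left]
  mul_mid_le := by nlinarith [h.left_add_right_le]
  left_add_right_le := by linarith [h.mul_mid_le]

theorem split_right (h : InWeightCone τ a b c) (hτ : 0 < τ) :
    InWeightCone τ (2 * c) (a + c) (τ * b) where
  right_pos := mul_pos hτ h.mid_pos
  right_le_left := h.mul_mid_le
  mul_mid_le := by nlinarith [h.left_add_right_le]
  left_add_right_le := by linarith [h.mul_mid_le, h.right_le_left]

theorem div_four_le_ratio (h : InWeightCone τ a b c) (hτ : 0 < τ) : τ / 4 ≤ c / (a + c) := by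
  rw [div_le_div_iff₀ (by norm_num) (add_pos h.left_pos h.right_pos)]
  nlinarith [h.left_add_right_le, h.mul_mid_le]

theorem ratio_le_half (h : InWeightCone τ a b c) : c / (a + c) ≤ 1 / 2 := by
  rw [div_le_div_iff₀ (add_pos h.left_pos h.right_pos) (by norm_num)]
  linarith [h.right_le_left]

end InWeightCone

section ProjectiveTriangle

variable {E : Type*} [SeminormedAddCommGroup E] [NormedSpace ℝ E]

/-- The invariant of the subdivision of the triangle with vertices `centralProj ℓ u`,
`centralProj ℓ v`, `centralProj ℓ w` and weights `ℓ u`, `ℓ v`, `ℓ w`. -/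
structure IsSubdivisionTriangle (ℓ : E →ₗ[ℝ] ℝ) (τ r : ℝ) (u v w : E) : Prop where
  weights : InWeightCone τ (ℓ u) (ℓ v) (ℓ w)
  edges : HasEdgeBounds (τ / 16) r (centralProj ℓ u) (centralProj ℓ v) (centralProj ℓ w)

namespace IsSubdivisionTriangle

variable {ℓ : E →ₗ[ℝ] ℝ} {τ r : ℝ} {u v w : E}

theorem split_left (h : IsSubdivisionTriangle ℓ τ r u v w) (hτ : 0 < τ) :
    IsSubdivisionTriangle ℓ τ ((1 - τ / 16) * r) ((2 : ℝ) • u) (u + w) (τ • v) where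
  weights := by simpa using h.weights.split_left hτ
  edges := by
    rw [centralProj_smul two_ne_zero, centralProj_smul hτ.ne',
      centralProj_add h.weights.left_pos h.weights.right_pos]
    exact h.edges.split_left (by positivity) (by linarith [h.weights.div_four_le_ratio hτ])
      h.weights.ratio_le_half

theorem split_right (h : IsSubdivisionTriangle ℓ τ r u v w) (hτ : 0 < τ) :
    IsSubdivisionTriangle ℓ τ ((1 - τ / 16) * r) ((2 : ℝ) • w) (u + w) (τ • v) where
  weights := by simpa using h.weights.split_right hτ
  edges := by
    rw [centralProj_smul two_ne_zero, centralProj_smul hτ.ne',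
      centralProj_add h.weights.left_pos h.weights.right_pos]
    exact h.edges.split_right (by positivity) (by linarith [h.weights.div_four_le_ratio hτ])
      h.weights.ratio_le_half

end IsSubdivisionTriangle

theorem IsSubdivisionTriangle.dist_centralProj_le {ℓ : E →ₗ[ℝ] ℝ} {τ r : ℝ} {u v w : E}
    (h : IsSubdivisionTriangle ℓ τ r u v w) (hτ : 0 ≤ τ) {p : ℝ × ℝ × ℝ} (hp : p ∈ Delta) :
    dist (centralProj ℓ (ofColumns u v w p)) (centralProj ℓ v) ≤ r := by
  have hr := h.edges.nonneg
  have hτr : 0 ≤ τ * r := mul_nonneg hτ hr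
  refine (ofColumns_mem (convex_setOf_centralProj_mem ℓ
    (convex_closedBall (centralProj ℓ v) r)) ⟨h.weights.left_pos, ?_⟩
    ⟨h.weights.mid_pos, Metric.mem_closedBall_self hr⟩ ⟨h.weights.right_pos, ?_⟩ hp).2
  · exact h.edges.dist_left_mid.trans (by linarith)
  · exact Metric.mem_closedBall'.2 (h.edges.dist_mid_right.trans (by linarith))

end ProjectiveTriangle

/-! ### The family of fold maps of the simplex -/

/-- The sum of the coordinates of a vector in `ℝ³`. -/
noncomputable def coordSum : ℝ × ℝ × ℝ →ₗ[ℝ] ℝ :=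
  ofColumns 1 1 1

theorem coordSum_apply (p : ℝ × ℝ × ℝ) : coordSum p = p.1 + p.2.1 + p.2.2 := by
  simp [coordSum, ofColumns_apply]

namespace Delta

theorem mem_iff {p : ℝ × ℝ × ℝ} : p ∈ Delta ↔ 0 ≤ p ∧ coordSum p = 1 := by
  simp [Delta, Prod.le_def, coordSum_apply, and_assoc]

theorem isCompact : IsCompact Delta := by
  have hclosed : IsClosed Delta := by
    simp only [Delta, Set.ofPred_and]
    refine (isClosed_le ?_ ?_).inter ((isClosed_le ?_ ?_).inter ((isClosed_le ?_ ?_).inter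
      (isClosed_eq ?_ ?_))) <;> fun_prop
  refine (isCompact_Icc (a := (0 : ℝ × ℝ × ℝ)) (b := 1)).of_isClosed_subset hclosed ?_
  rintro p ⟨hx, hy, hz, hsum⟩
  exact ⟨⟨hx, hy, hz⟩, ⟨by simp; linarith, by simp; linarith, by simp; linarith⟩⟩

instance : CompactSpace Delta :=
  isCompact_iff_compactSpace.1 isCompact

theorem centralProj_mem {v : ℝ × ℝ × ℝ} (hv : 0 ≤ v) (hsum : 0 < coordSum v) :
    centralProj coordSum v ∈ Delta :=
  mem_iff.2 ⟨smul_nonneg (inv_nonneg.2 hsum.le) hv, map_centralProj hsum.ne'⟩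

theorem centralProj_smul_self (p : Delta) {c : ℝ} (hc : c ≠ 0) :
    centralProj coordSum (c • (p : ℝ × ℝ × ℝ)) = p := by
  rw [centralProj_smul hc, centralProj_of_eq_one (mem_iff.1 p.2).2]

/-- The linear map whose projection is the inverse branch of the fold map onto the half `z ≤ x` of
the simplex (for `i = true`), or onto the half `x ≤ z` (for `i = false`). -/
noncomputable def branchLin (τ : ℝ) (i : Bool) : ℝ × ℝ × ℝ →ₗ[ℝ] ℝ × ℝ × ℝ :=
  ofColumns (bif i then (2, 0, 0) else (0, 0, 2)) (1, 0, 1) (0, τ, 0)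

theorem branchLin_true_apply (τ : ℝ) (p : ℝ × ℝ × ℝ) :
    branchLin τ true p = (2 * p.1 + p.2.1, τ * p.2.2, p.2.1) := by
  ext <;> simp [branchLin, ofColumns_apply, mul_comm]

theorem branchLin_false_apply (τ : ℝ) (p : ℝ × ℝ × ℝ) :
    branchLin τ false p = (p.2.1, τ * p.2.2, 2 * p.1 + p.2.1) := by
  ext <;> simp [branchLin, ofColumns_apply, mul_comm, add_comm]

/-- The piecewise linear map whose projection is the fold map of the simplex. -/
noncomputable def foldLin (τ : ℝ) (p : ℝ × ℝ × ℝ) : ℝ × ℝ × ℝ :=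
  (τ * |p.1 - p.2.2|, 2 * τ * min p.1 p.2.2, 2 * p.2.1)

theorem foldLin_smul (τ : ℝ) {c : ℝ} (hc : 0 ≤ c) (p : ℝ × ℝ × ℝ) :
    foldLin τ (c • p) = c • foldLin τ p := by
  ext <;> simp only [foldLin, Prod.smul_fst, Prod.smul_snd, smul_eq_mul, ← mul_sub, abs_mul,
    abs_of_nonneg hc, ← mul_min_of_nonneg _ _ hc] <;> ring

theorem foldLin_branchLin (τ : ℝ) (i : Bool) {p : ℝ × ℝ × ℝ} (hp : 0 ≤ p) :
    foldLin τ (branchLin τ i p) = (2 * τ) • p := by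
  have hx : 0 ≤ 2 * p.1 := mul_nonneg zero_le_two hp.1
  cases i <;>
    ext <;> simp [foldLin, branchLin_true_apply, branchLin_false_apply, hx, abs_of_nonneg] <;> ring

theorem exists_branchLin_foldLin (τ : ℝ) (p : ℝ × ℝ × ℝ) :
    ∃ i, branchLin τ i (foldLin τ p) = (2 * τ) • p := by
  rcases le_total p.1 p.2.2 with hxz | hzx
  · refine ⟨false, ?_⟩
    ext <;> simp [foldLin, branchLin_false_apply, hxz, abs_of_nonpos] <;> ring
  · refine ⟨true, ?_⟩
    ext <;> simp [foldLin, branchLin_true_apply, hzx, abs_of_nonneg] <;> ring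

theorem coordSum_foldLin (τ : ℝ) (p : ℝ × ℝ × ℝ) :
    coordSum (foldLin τ p) = τ * (p.1 + p.2.2) + 2 * p.2.1 := by
  rw [coordSum_apply, ← max_add_min p.1 p.2.2, foldLin, ← max_sub_min_eq_abs' p.1 p.2.2]
  ring

theorem coordSum_branchLin (τ : ℝ) (i : Bool) (p : ℝ × ℝ × ℝ) :
    coordSum (branchLin τ i p) = 2 * p.1 + 2 * p.2.1 + τ * p.2.2 := by
  cases i <;> simp only [coordSum_apply, branchLin_true_apply, branchLin_false_apply] <;> ring

theorem coordSum_foldLin_pos {τ : ℝ} (hτ : 0 < τ) (p : Delta) : 0 < coordSum (foldLin τ p) := by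
  obtain ⟨hx, hy, hz, hsum⟩ := p.2
  rw [coordSum_foldLin]
  nlinarith [lt_min hτ two_pos, min_le_left τ 2, min_le_right τ 2]

theorem coordSum_branchLin_pos {τ : ℝ} (hτ : 0 < τ) (i : Bool) (p : Delta) :
    0 < coordSum (branchLin τ i p) := by
  obtain ⟨hx, hy, hz, hsum⟩ := p.2
  rw [coordSum_branchLin]
  nlinarith [lt_min hτ two_pos, min_le_left τ 2, min_le_right τ 2]

theorem foldLin_nonneg {τ : ℝ} (hτ : 0 ≤ τ) {p : ℝ × ℝ × ℝ} (hp : 0 ≤ p) : 0 ≤ foldLin τ p := by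
  have hmin : 0 ≤ min p.1 p.2.2 := le_min hp.1 hp.2.2
  exact ⟨mul_nonneg hτ (abs_nonneg _), mul_nonneg (mul_nonneg zero_le_two hτ) hmin,
    mul_nonneg zero_le_two hp.2.1⟩

theorem branchLin_nonneg {τ : ℝ} (hτ : 0 ≤ τ) (i : Bool) {p : ℝ × ℝ × ℝ} (hp : 0 ≤ p) :
    0 ≤ branchLin τ i p := by
  have hxy : 0 ≤ 2 * p.1 + p.2.1 := add_nonneg (mul_nonneg zero_le_two hp.1) hp.2.1
  have hz : 0 ≤ τ * p.2.2 := mul_nonneg hτ hp.2.2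
  cases i
  · rw [branchLin_false_apply]
    exact ⟨hp.2.1, hz, hxy⟩
  · rw [branchLin_true_apply]
    exact ⟨hxy, hz, hp.2.1⟩

/-- The fold map of the simplex with parameter `τ`: `F` for `τ = 2` and `F̃` for `τ = 1`. -/
noncomputable def fold {τ : ℝ} (hτ : 0 < τ) (p : Delta) : Delta :=
  ⟨centralProj coordSum (foldLin τ p),
    centralProj_mem (foldLin_nonneg hτ.le (mem_iff.1 p.2).1) (coordSum_foldLin_pos hτ p)⟩

/-- The two inverse branches of the fold map of the simplex. -/
noncomputable def branch {τ : ℝ} (hτ : 0 < τ) (i : Bool) (p : Delta) : Delta :=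
  ⟨centralProj coordSum (branchLin τ i p),
    centralProj_mem (branchLin_nonneg hτ.le i (mem_iff.1 p.2).1) (coordSum_branchLin_pos hτ i p)⟩

theorem fold_branch {τ : ℝ} (hτ : 0 < τ) (i : Bool) (p : Delta) :
    fold hτ (branch hτ i p) = p := by
  have hsum : 0 < (coordSum (branchLin τ i p))⁻¹ := inv_pos.2 (coordSum_branchLin_pos hτ i p)
  ext1
  calc centralProj coordSum (foldLin τ ((coordSum (branchLin τ i p))⁻¹ • branchLin τ i p))
      = centralProj coordSum ((2 * τ) • (p : ℝ × ℝ × ℝ)) := by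
        rw [foldLin_smul τ hsum.le, centralProj_smul hsum.ne',
          foldLin_branchLin τ i (mem_iff.1 p.2).1]
    _ = p := centralProj_smul_self p (by positivity)

theorem exists_branch_fold {τ : ℝ} (hτ : 0 < τ) (p : Delta) :
    ∃ i, branch hτ i (fold hτ p) = p := by
  obtain ⟨i, hi⟩ := exists_branchLin_foldLin τ p
  refine ⟨i, Subtype.ext ?_⟩
  calc centralProj coordSum (branchLin τ i (centralProj coordSum (foldLin τ p)))
      = centralProj coordSum ((2 * τ) • (p : ℝ × ℝ × ℝ)) := by
        rw [centralProj_map_centralProj _ _ (coordSum_foldLin_pos hτ p).ne', hi]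
    _ = p := centralProj_smul_self p (by positivity)

theorem uncurry_branch_surjective {τ : ℝ} (hτ : 0 < τ) : (uncurry (branch hτ)).Surjective :=
  fun p => (exists_branch_fold hτ p).imp' (·, fold hτ p) fun _ => id

theorem continuous_branch {τ : ℝ} (hτ : 0 < τ) (i : Bool) : Continuous (branch hτ i) := by
  have hlin : Continuous fun p : Delta => branchLin τ i p :=
    (LinearMap.continuous_of_finiteDimensional _).comp continuous_subtype_val
  have hsum : Continuous fun p : Delta => coordSum (branchLin τ i p) :=
    (LinearMap.continuous_of_finiteDimensional _).comp hlin
  exact ((hsum.inv₀ fun p => (coordSum_branchLin_pos hτ i p).ne').smul hlin).subtype_mk _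

/-! ### Shrinking of the branches -/

theorem isSubdivisionTriangle_basis {τ : ℝ} (hτ₂ : τ ≤ 2) :
    IsSubdivisionTriangle coordSum τ 2 (1, 0, 0) (0, 1, 0) (0, 0, 1) := by
  refine ⟨⟨?_, ?_, ?_, ?_⟩, ⟨?_, ?_, ?_⟩⟩ <;>
    norm_num [coordSum_apply, centralProj, dist_eq_norm, Prod.norm_def] <;> linarith

theorem exists_isSubdivisionTriangle_foldr_branch {τ : ℝ} (hτ : 0 < τ) (hτ₂ : τ ≤ 2)
    (l : List Bool) :
    ∃ u v w, IsSubdivisionTriangle coordSum τ (2 * (1 - τ / 16) ^ l.length) u v w ∧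
      ∀ p : Delta,
        ((l.foldr (branch hτ) p : Delta) : ℝ × ℝ × ℝ) =
          centralProj coordSum (ofColumns u v w p) := by
  induction l using List.reverseRecOn with
  | nil =>
    refine ⟨(1, 0, 0), (0, 1, 0), (0, 0, 1), ?_, fun p => ?_⟩
    · simpa using isSubdivisionTriangle_basis hτ₂
    · have hp : ofColumns (E := ℝ × ℝ × ℝ) (1, 0, 0) (0, 1, 0) (0, 0, 1) p = p := by
        ext <;> simp [ofColumns_apply]
      rw [hp, centralProj_of_eq_one (mem_iff.1 p.2).2, List.foldr_nil]
  | append_singleton l i ih =>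
    obtain ⟨u, v, w, htriangle, hfoldr⟩ := ih
    have hstep : ∀ p : Delta, (((l ++ [i]).foldr (branch hτ) p : Delta) : ℝ × ℝ × ℝ) =
        centralProj coordSum (ofColumns u v w (branchLin τ i p)) := fun p => by
      rw [List.foldr_append, List.foldr_cons, List.foldr_nil, hfoldr]
      exact centralProj_map_centralProj _ _ (coordSum_branchLin_pos hτ i p).ne'
    have hr : 2 * (1 - τ / 16) ^ (l ++ [i]).length =
        (1 - τ / 16) * (2 * (1 - τ / 16) ^ l.length) := by
      rw [List.length_append, List.length_singleton]; ring
    rw [hr]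
    cases i with
    | true =>
      refine ⟨_, _, _, htriangle.split_left hτ, fun p => ?_⟩
      rw [hstep, branchLin_true_apply]
      congr 1
      simp only [ofColumns_apply]
      module
    | false =>
      refine ⟨_, _, _, htriangle.split_right hτ, fun p => ?_⟩
      rw [hstep, branchLin_false_apply]
      congr 1
      simp only [ofColumns_apply]
      module

theorem isShrinking_branch {τ : ℝ} (hτ : 0 < τ) (hτ₂ : τ ≤ 2) : IsShrinking (branch hτ) := by
  refine ⟨fun n => 2 * (2 * (1 - τ / 16) ^ n), ?_, fun l p q => ?_⟩
  · simpa using ((tendsto_pow_atTop_nhds_zero_of_lt_one (r := 1 - τ / 16) (by linarith)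
      (by linarith)).const_mul 2).const_mul 2
  · obtain ⟨u, v, w, htriangle, hfoldr⟩ := exists_isSubdivisionTriangle_foldr_branch hτ hτ₂ l
    rw [Subtype.dist_eq, hfoldr, hfoldr]
    refine (dist_triangle_right _ _ (centralProj coordSum v)).trans ?_
    linarith [htriangle.dist_centralProj_le hτ.le p.2, htriangle.dist_centralProj_le hτ.le q.2]

/-! ### Transfer of edge-preserving maps -/

/-- Self-maps of the simplex sending each of the edges `x = 0`, `y = 0`, `z = 0` into itself. -/
structure PreservesEdges (φ : Delta → Delta) : Prop where
  fst : ∀ p : Delta, p.1.1 = 0 → (φ p).1.1 = 0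
  mid : ∀ p : Delta, p.1.2.1 = 0 → (φ p).1.2.1 = 0
  last : ∀ p : Delta, p.1.2.2 = 0 → (φ p).1.2.2 = 0

section Edges

variable {τ τ' : ℝ} (hτ : 0 < τ) (hτ' : 0 < τ')

theorem two_mul_fst_add_mid_eq_zero {p : Delta} :
    2 * p.1.1 + p.1.2.1 = 0 ↔ p.1.1 = 0 ∧ p.1.2.1 = 0 := by
  rw [add_eq_zero_iff_of_nonneg (mul_nonneg zero_le_two p.2.1) p.2.2.1,
    mul_eq_zero_iff_left two_ne_zero]

theorem branch_fst_eq_zero {i : Bool} {p : Delta} :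
    (branch hτ i p).1.1 = 0 ↔ p.1.2.1 = 0 ∧ (i = true → p.1.1 = 0) := by
  refine (mul_eq_zero_iff_left (inv_ne_zero (coordSum_branchLin_pos hτ i p).ne')).trans ?_
  cases i <;>
    simp [branchLin_true_apply, branchLin_false_apply, two_mul_fst_add_mid_eq_zero, and_comm]

theorem branch_mid_eq_zero {i : Bool} {p : Delta} : (branch hτ i p).1.2.1 = 0 ↔ p.1.2.2 = 0 := by
  refine (mul_eq_zero_iff_left (inv_ne_zero (coordSum_branchLin_pos hτ i p).ne')).trans ?_
  cases i <;> simp [branchLin_true_apply, branchLin_false_apply, hτ.ne']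

theorem branch_last_eq_zero {i : Bool} {p : Delta} :
    (branch hτ i p).1.2.2 = 0 ↔ p.1.2.1 = 0 ∧ (i = false → p.1.1 = 0) := by
  refine (mul_eq_zero_iff_left (inv_ne_zero (coordSum_branchLin_pos hτ i p).ne')).trans ?_
  cases i <;>
    simp [branchLin_true_apply, branchLin_false_apply, two_mul_fst_add_mid_eq_zero, and_comm]

theorem PreservesEdges.of_isTransfer {φ φ' : Delta → Delta} (hφ : PreservesEdges φ)
    (h : IsTransfer (branch hτ) (branch hτ') φ φ') : PreservesEdges φ' where
  fst p hp := by
    obtain ⟨⟨i, q⟩, rfl⟩ := uncurry_branch_surjective hτ p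
    obtain ⟨hy, hx⟩ := (branch_fst_eq_zero hτ).1 hp
    exact h i q ▸ (branch_fst_eq_zero hτ').2 ⟨hφ.mid q hy, fun hi => hφ.fst q (hx hi)⟩
  mid p hp := by
    obtain ⟨⟨i, q⟩, rfl⟩ := uncurry_branch_surjective hτ p
    exact h i q ▸ (branch_mid_eq_zero hτ').2 (hφ.last q ((branch_mid_eq_zero hτ).1 hp))
  last p hp := by
    obtain ⟨⟨i, q⟩, rfl⟩ := uncurry_branch_surjective hτ p
    obtain ⟨hy, hx⟩ := (branch_last_eq_zero hτ).1 hp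
    exact h i q ▸ (branch_last_eq_zero hτ').2 ⟨hφ.mid q hy, fun hi => hφ.fst q (hx hi)⟩

theorem branchLin_true_eq_false_iff {p : ℝ × ℝ × ℝ} :
    branchLin τ true p = branchLin τ false p ↔ p.1 = 0 := by
  simp [branchLin_true_apply, branchLin_false_apply]

theorem branch_true_eq_false_iff {p : Delta} :
    branch hτ true p = branch hτ false p ↔ p.1.1 = 0 := by
  have hsum := (coordSum_branchLin_pos hτ true p).ne'
  have heq : coordSum (branchLin τ false p) = coordSum (branchLin τ true p) := by
    simp only [coordSum_branchLin]
  rw [branch, branch, Subtype.mk.injEq, centralProj, centralProj, heq,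
    smul_right_inj (inv_ne_zero hsum), branchLin_true_eq_false_iff]

theorem PreservesEdges.branch_eq_branch {φ : Delta → Delta} (hφ : PreservesEdges φ) (i j : Bool)
    (p q : Delta) (hpq : branch hτ i p = branch hτ j q) :
    branch hτ' i (φ p) = branch hτ' j (φ q) := by
  obtain rfl : p = q := by simpa only [fold_branch] using congrArg (fold hτ) hpq
  have hglue (h : branch hτ true p = branch hτ false p) :
      branch hτ' true (φ p) = branch hτ' false (φ p) :=
    (branch_true_eq_false_iff hτ').2 (hφ.fst p ((branch_true_eq_false_iff hτ).1 h))
  match i, j with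
  | true, true | false, false => rfl
  | true, false => exact hglue hpq
  | false, true => exact (hglue hpq.symm).symm

/-! ### Conjugacies of fold maps -/

theorem exists_semiconj_branch (hτ'₂ : τ' ≤ 2) :
    ∃ ψ : C(Delta, Delta), ∀ i, Semiconj ψ (branch hτ i) (branch hτ' i) := by
  refine (isShrinking_branch hτ' hτ'₂).exists_semiconj (uncurry_branch_surjective hτ)
    (continuous_branch hτ') (𝓐 := {φ | PreservesEdges φ})
    ⟨.id Delta, fun _ => id, fun _ => id, fun _ => id⟩ fun φ hφ => ?_
  obtain ⟨φ', hφ'⟩ := exists_isTransfer (uncurry_branch_surjective hτ) (continuous_branch hτ)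
    (continuous_branch hτ') φ (hφ.branch_eq_branch hτ hτ')
  exact ⟨φ', hφ.of_isTransfer hτ hτ' hφ', hφ'⟩

theorem exists_homeomorph_semiconj_fold (hτ₂ : τ ≤ 2) (hτ'₂ : τ' ≤ 2) :
    ∃ ψ : Delta ≃ₜ Delta, Semiconj ψ (fold hτ) (fold hτ') := by
  obtain ⟨ψ, hψ⟩ := exists_semiconj_branch hτ hτ' hτ'₂
  obtain ⟨χ, hχ⟩ := exists_semiconj_branch hτ' hτ hτ₂
  obtain ⟨e, he⟩ := exists_homeomorph_of_semiconj (uncurry_branch_surjective hτ)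
    (isShrinking_branch hτ hτ₂) (uncurry_branch_surjective hτ') (isShrinking_branch hτ' hτ'₂)
    ψ hψ χ hχ
  refine ⟨e, fun p => ?_⟩
  obtain ⟨⟨i, q⟩, rfl⟩ := uncurry_branch_surjective hτ p
  rw [he, uncurry_apply_pair, fold_branch, hψ i q, fold_branch]

end Edges

theorem coe_fold_two (p : Delta) : (fold two_pos p : ℝ × ℝ × ℝ) = Fmap p := by
  have hsum : coordSum (foldLin 2 p) = 2 := by
    rw [coordSum_foldLin]; linarith [p.2.2.2.2]
  change (coordSum (foldLin 2 p))⁻¹ • foldLin 2 p = _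
  rw [hsum]
  ext <;> simp [foldLin, Fmap, mul_assoc]

theorem coe_fold_one (p : Delta) : (fold one_pos p : ℝ × ℝ × ℝ) = Ftil p := by
  have hsum : coordSum (foldLin 1 p) = 1 + p.1.2.1 := by
    rw [coordSum_foldLin]; linarith [p.2.2.2.2]
  change (coordSum (foldLin 1 p))⁻¹ • foldLin 1 p = _
  rw [hsum]
  ext <;> simp [foldLin, Ftil, div_eq_inv_mul]

end Delta

/-- F and F̃ map Δ into Δ, and they are topologically conjugate as self-maps
of Δ: there is a homeomorphism ψ : Δ → Δ with ψ ∘ F = F̃ ∘ ψ on Δ. -/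
theorem statement11 :
    (∀ p ∈ Delta, Fmap p ∈ Delta) ∧ (∀ p ∈ Delta, Ftil p ∈ Delta) ∧
    ∃ ψ : Delta ≃ₜ Delta, ∀ (p : Delta) (hF : Fmap ↑p ∈ Delta),
      (ψ ⟨Fmap ↑p, hF⟩ : ℝ × ℝ × ℝ) = Ftil ↑(ψ p) := by
  refine ⟨fun p hp => Delta.coe_fold_two ⟨p, hp⟩ ▸ Subtype.coe_prop _,
    fun p hp => Delta.coe_fold_one ⟨p, hp⟩ ▸ Subtype.coe_prop _, ?_⟩
  obtain ⟨ψ, hψ⟩ := Delta.exists_homeomorph_semiconj_fold two_pos one_pos le_rfl one_le_two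
  refine ⟨ψ, fun p hF => ?_⟩
  have hfold : (⟨Fmap p, hF⟩ : Delta) = Delta.fold two_pos p :=
    Subtype.ext (Delta.coe_fold_two p).symm
  rw [hfold, hψ p, Delta.coe_fold_one]
end

section
/- Let i₁, i₂, …, i_n be any finite (possibly empty) sequence over {1,2}, let M = B_{i₁}·B_{i₂}⋯B_{i_n} (the identity matrix if the sequence is empty), and let a, b, c be the sums of the entries of the first, second, and third columns of M, respectively. Then 1/3 < a/c < 3, 1/3 < a/b < 3/2, and 1/3 < c/b < 3/2. -/
/-!
Multiplying `M` on the right by `B₁` or `B₂` sends the row vector of column sums `(a, b, c)` to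
`(2c, a + c, b)` or `(2a, a + c, b)` respectively. The six inequalities, cleared of denominators,
cut out a cone that contains `(1, 1, 1)` and is mapped into itself by both maps: each new
inequality is a nonnegative combination of the old ones.
-/

/-- The matrices B₁ and B₂, indexed by {1,2}. -/
def Bmat : Fin 2 → Matrix (Fin 3) (Fin 3) ℤ :=
  ![!![0, 1, 0; 0, 0, 1; 2, 1, 0], !![2, 1, 0; 0, 0, 1; 0, 1, 0]]

open Matrix

theorem mapsTo_vecMul_list_prod {n R : Type*} [Fintype n] [DecidableEq n] [Semiring R]
    {S : Set (n → R)} (l : List (Matrix n n R)) (hl : ∀ A ∈ l, Set.MapsTo (· ᵥ* A) S S) :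
    Set.MapsTo (· ᵥ* l.prod) S S := by
  refine List.prod_induction (fun A ↦ Set.MapsTo (· ᵥ* A) S S) ?_ ?_ hl
  · intro A B hA hB v hv
    simpa only [vecMul_vecMul] using hB (hA hv)
  · intro v hv
    simpa only [vecMul_one] using hv

theorem vecMul_Bmat_zero (v : Fin 3 → ℤ) : v ᵥ* Bmat 0 = ![2 * v 2, v 0 + v 2, v 1] := by
  ext j
  fin_cases j <;> simp [Bmat, vecMul, dotProduct, Fin.sum_univ_three, mul_comm]

theorem vecMul_Bmat_one (v : Fin 3 → ℤ) : v ᵥ* Bmat 1 = ![2 * v 0, v 0 + v 2, v 1] := by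
  ext j
  fin_cases j <;> simp [Bmat, vecMul, dotProduct, Fin.sum_univ_three, mul_comm]

/-- The open cone of integer vectors `(a, b, c)` with `1/3 < a/c < 3`, `1/3 < a/b < 3/2` and
`1/3 < c/b < 3/2`, encoded with denominators cleared; positivity of `a`, `b`, `c` follows from
these linear inequalities. -/
def ratioCone : Set (Fin 3 → ℤ) :=
  {v | (v 2 < 3 * v 0 ∧ v 0 < 3 * v 2) ∧ (v 1 < 3 * v 0 ∧ 2 * v 0 < 3 * v 1) ∧
    (v 1 < 3 * v 2 ∧ 2 * v 2 < 3 * v 1)}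

theorem one_mem_ratioCone : 1 ∈ ratioCone := by
  simp [ratioCone]

theorem mapsTo_vecMul_Bmat_ratioCone (i : Fin 2) :
    Set.MapsTo (· ᵥ* Bmat i) ratioCone ratioCone := by
  rintro v ⟨⟨hca, hac⟩, ⟨hba, hab⟩, hbc, hcb⟩
  match i with
  | 0 =>
    change v ᵥ* Bmat 0 ∈ ratioCone
    rw [vecMul_Bmat_zero]
    refine ⟨⟨?_, ?_⟩, ⟨?_, ?_⟩, ?_, ?_⟩ <;> dsimp <;> linarith
  | 1 =>
    change v ᵥ* Bmat 1 ∈ ratioCone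
    rw [vecMul_Bmat_one]
    refine ⟨⟨?_, ?_⟩, ⟨?_, ?_⟩, ?_, ?_⟩ <;> dsimp <;> linarith

theorem colSum_Bmat_prod_mem_ratioCone (w : List (Fin 2)) :
    (fun j ↦ ∑ i, (w.map Bmat).prod i j) ∈ ratioCone := by
  have hmaps : ∀ A ∈ w.map Bmat, Set.MapsTo (· ᵥ* A) ratioCone ratioCone :=
    List.forall_mem_map.2 fun i _ ↦ mapsTo_vecMul_Bmat_ratioCone i
  have hsum : (fun j ↦ ∑ i, (w.map Bmat).prod i j) = 1 ᵥ* (w.map Bmat).prod := by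
    ext j
    simp only [vecMul, one_dotProduct]
  rw [hsum]
  exact mapsTo_vecMul_list_prod _ hmaps one_mem_ratioCone

theorem ratio_bounds_of_mem_ratioCone {K : Type*} [Field K] [LinearOrder K]
    [IsStrictOrderedRing K] {v : Fin 3 → ℤ} (hv : v ∈ ratioCone) :
    (1 / 3 : K) < v 0 / v 2 ∧ (v 0 / v 2 : K) < 3 ∧
    (1 / 3 : K) < v 0 / v 1 ∧ (v 0 / v 1 : K) < 3 / 2 ∧
    (1 / 3 : K) < v 2 / v 1 ∧ (v 2 / v 1 : K) < 3 / 2 := by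
  obtain ⟨⟨hca, hac⟩, ⟨hba, hab⟩, hbc, hcb⟩ := hv
  have hb : (0 : K) < v 1 := Int.cast_pos.2 (by linarith)
  have hc : (0 : K) < v 2 := Int.cast_pos.2 (by linarith)
  rify [← @Int.cast_lt K] at hca hac hba hab hbc hcb
  refine ⟨(lt_div_iff₀ hc).2 ?_, (div_lt_iff₀ hc).2 ?_, (lt_div_iff₀ hb).2 ?_,
    (div_lt_iff₀ hb).2 ?_, (lt_div_iff₀ hb).2 ?_, (div_lt_iff₀ hb).2 ?_⟩ <;> linarith

/-- For any (possibly empty) product M = B_{i₁}⋯B_{i_n}, the column sums a, b, c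
of M satisfy 1/3 < a/c < 3, 1/3 < a/b < 3/2 and 1/3 < c/b < 3/2. -/
theorem statement12 (w : List (Fin 2)) :
    let M : Matrix (Fin 3) (Fin 3) ℤ := (w.map Bmat).prod
    let a : ℤ := ∑ i, M i 0
    let b : ℤ := ∑ i, M i 1
    let c : ℤ := ∑ i, M i 2
    (1 / 3 : ℝ) < (a : ℝ) / (c : ℝ) ∧ (a : ℝ) / (c : ℝ) < 3 ∧
    (1 / 3 : ℝ) < (a : ℝ) / (b : ℝ) ∧ (a : ℝ) / (b : ℝ) < 3 / 2 ∧
    (1 / 3 : ℝ) < (c : ℝ) / (b : ℝ) ∧ (c : ℝ) / (b : ℝ) < 3 / 2 :=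
  ratio_bounds_of_mem_ratioCone (colSum_Bmat_prod_mem_ratioCone w)
end
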